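/- arXiv:2007.09030 — 2 statements merged into one kernel-verified Lean document; each statement's English description precedes it below -/
import Mathlib

section
/- Let X be a nonempty metric space whose conformal dimension Q = Confdim X is finite and positive and is attained, i.e., there exist an Ahlfors Q-regular metric space W and a quasisymmetric homeomorphism from X onto W. Then no nonempty porous subset Y ⊆ X (with the induced metric) admits a quasisymmetric homeomorphism onto X. -/
open scoped NNReal

universe u

/-- A subset `Y` of a metric space `X` is porous. -/
def Porous {X : Type*} [MetricSpace X] (Y : Set X) : Prop :=
  ∃ c : ℝ, 0 < c ∧ ∀ y ∈ Y, ∀ r : ℝ, 0 < r →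
    ENNReal.ofReal r ≤ EMetric.diam (Set.univ : Set X) →
    ∃ x : X, Metric.ball x (c * r) ⊆ Metric.ball y r \ Y

/-- `f` is `η`-quasisymmetric, the control `η` being a self-homeomorphism of `[0,∞)`. -/
def IsQuasisymmetricWith {X X' : Type*} [MetricSpace X] [MetricSpace X']
    (η : ℝ≥0 ≃ₜ ℝ≥0) (f : X → X') : Prop :=
  ∀ x y z : X, ∀ t : ℝ≥0, nndist x y ≤ t * nndist x z →
    nndist (f x) (f y) ≤ η t * nndist (f x) (f z)

/-- `f` is quasisymmetric if it is `η`-quasisymmetric for some homeomorphism `η` of `[0,∞)`. -/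
def IsQuasisymmetric {X X' : Type*} [MetricSpace X] [MetricSpace X'] (f : X → X') : Prop :=
  ∃ η : ℝ≥0 ≃ₜ ℝ≥0, IsQuasisymmetricWith η f

/-- A metric space `W` is Ahlfors `Q`-regular: it is complete and carries a Borel measure `μ`
with `C⁻¹ r^Q ≤ μ(B(w,r)) ≤ C r^Q` for all `w` and `0 < r ≤ diam W`. -/
def AhlforsRegular (W : Type u) [MetricSpace W] (Q : ℝ) : Prop :=
  CompleteSpace W ∧
    ∃ (_ : MeasurableSpace W) (_ : BorelSpace W) (μ : MeasureTheory.Measure W) (C : ℝ),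
      1 ≤ C ∧ ∀ w : W, ∀ r : ℝ, 0 < r →
        ENNReal.ofReal r ≤ EMetric.diam (Set.univ : Set W) →
        ENNReal.ofReal (C⁻¹ * r ^ Q) ≤ μ (Metric.ball w r) ∧
          μ (Metric.ball w r) ≤ ENNReal.ofReal (C * r ^ Q)

/-- The set of exponents `Q ≥ 0` such that `Z` is quasisymmetric to some Ahlfors
`Q`-regular metric space. -/
def confdimSet (Z : Type u) [MetricSpace Z] : Set ℝ :=
  {Q : ℝ | 0 ≤ Q ∧ ∃ (W : Type u) (_ : MetricSpace W) (f : Z ≃ₜ W),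
    AhlforsRegular W Q ∧ IsQuasisymmetric (f : Z → W)}

/-- The (Ahlfors regular) conformal dimension of `Z`. -/
noncomputable def confdim (Z : Type u) [MetricSpace Z] : ℝ :=
  sInf (confdimSet Z)


section
open scoped NNReal ENNReal
namespace PorousQS

lemma eta_strictMono (η : ℝ≥0 ≃ₜ ℝ≥0) : StrictMono η := by
  rcases Continuous.strictMono_of_inj η.continuous η.injective with h | h
  · exact h
  · exfalso
    obtain ⟨t, ht⟩ := η.surjective (η 0 + 1)
    have : η t ≤ η 0 := h.antitone (zero_le (a := t))
    rw [ht] at this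
    have h2 : η 0 < η 0 + 1 := lt_add_of_pos_right _ one_pos
    exact absurd this (not_le.mpr h2)

lemma eta_zero (η : ℝ≥0 ≃ₜ ℝ≥0) : η 0 = 0 := by
  obtain ⟨t, ht⟩ := η.surjective 0
  have : η 0 ≤ η t := (eta_strictMono η).monotone (zero_le (a := t))
  rw [ht] at this
  exact le_antisymm this (zero_le (a := _))

lemma eta_pos (η : ℝ≥0 ≃ₜ ℝ≥0) {t : ℝ≥0} (ht : 0 < t) : 0 < η t := by
  have := eta_strictMono η ht
  rwa [eta_zero] at this

/-- Homeomorphism of the half line from a strictly monotone surjection. -/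
lemma exists_homeo_of_strictMono (f : ℝ≥0 → ℝ≥0) (hf : StrictMono f)
    (hs : Function.Surjective f) : ∃ η : ℝ≥0 ≃ₜ ℝ≥0, ∀ t, η t = f t :=
  ⟨(hf.orderIsoOfSurjective f hs).toHomeomorph, fun _ => rfl⟩

lemma qs_dist {X X' : Type*} [MetricSpace X] [MetricSpace X'] {η : ℝ≥0 ≃ₜ ℝ≥0} {f : X → X'}
    (h : IsQuasisymmetricWith η f) {x y z : X} {t : ℝ≥0} (hd : dist x y ≤ t * dist x z) :
    dist (f x) (f y) ≤ η t * dist (f x) (f z) := by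
  have := h x y z t (by
    rw [← NNReal.coe_le_coe]; push_cast; exact hd)
  rw [← NNReal.coe_le_coe] at this; push_cast at this; exact this

lemma qs_of_dist {X X' : Type*} [MetricSpace X] [MetricSpace X'] {η : ℝ≥0 ≃ₜ ℝ≥0} {f : X → X'}
    (h : ∀ (x y z : X) (t : ℝ≥0), dist x y ≤ t * dist x z →
      dist (f x) (f y) ≤ η t * dist (f x) (f z)) : IsQuasisymmetricWith η f := by
  intro x y z t hd
  rw [← NNReal.coe_le_coe] at hd ⊢; push_cast at hd ⊢
  exact h x y z t hd

lemma qs_comp {X X' X'' : Type*} [MetricSpace X] [MetricSpace X'] [MetricSpace X'']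
    {g : X' → X''} {f : X → X'} (hg : IsQuasisymmetric g) (hf : IsQuasisymmetric f) :
    IsQuasisymmetric (fun x => g (f x)) := by
  obtain ⟨η, h⟩ := hf
  obtain ⟨η', h'⟩ := hg
  exact ⟨η.trans η', fun x y z t hd => h' _ _ _ _ (h x y z t hd)⟩

lemma exists_inv_homeo (η : ℝ≥0 ≃ₜ ℝ≥0) : ∃ η' : ℝ≥0 ≃ₜ ℝ≥0, ∀ t, η' t = (η.symm t⁻¹)⁻¹ := by
  have hm := eta_strictMono η.symm
  have h0 := eta_zero η.symm
  apply exists_homeo_of_strictMono (fun t => (η.symm t⁻¹)⁻¹)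
  · intro a b hab
    have hb : 0 < b := lt_of_le_of_lt zero_le hab
    have hb' : 0 < η.symm b⁻¹ := eta_pos _ (inv_pos.mpr hb)
    rcases eq_or_lt_of_le (zero_le (a := a)) with ha | ha
    · subst ha
      simp only [inv_zero, h0]
      exact inv_pos.mpr hb'
    · have : η.symm b⁻¹ < η.symm a⁻¹ := hm (by gcongr)
      show (η.symm a⁻¹)⁻¹ < (η.symm b⁻¹)⁻¹
      gcongr
  · intro t
    refine ⟨(η t⁻¹)⁻¹, ?_⟩
    simp

lemma qs_symm {X X' : Type*} [MetricSpace X] [MetricSpace X'] (f : X ≃ X')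
    (hf : IsQuasisymmetric f) : IsQuasisymmetric f.symm := by
  obtain ⟨η, h⟩ := hf
  obtain ⟨η', hη'⟩ := exists_inv_homeo η
  refine ⟨η', ?_⟩
  have key : ∀ x y z : X, ∀ t : ℝ≥0, nndist (f x) (f y) ≤ t * nndist (f x) (f z) →
      nndist x y ≤ η' t * nndist x z := by
    intro x y z t hd
    by_contra hcon
    push Not at hcon
    have hxy : 0 < nndist x y := lt_of_le_of_lt zero_le hcon
    have hfxy : 0 < nndist (f x) (f y) := by
      rw [pos_iff_ne_zero] at hxy ⊢
      rw [Ne, nndist_eq_zero] at hxy ⊢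
      exact fun e => hxy (f.injective e)
    have ht : 0 < t := by
      rcases eq_or_lt_of_le (zero_le (a := t)) with h0 | h0
      · rw [← h0, zero_mul] at hd
        exact absurd hd (not_le.mpr hfxy)
      · exact h0
    set u := nndist x z / nndist x y with hu
    have h1 : u < η.symm t⁻¹ := by
      rw [hη'] at hcon
      have hp : 0 < η.symm t⁻¹ := eta_pos _ (inv_pos.mpr ht)
      rw [hu, div_lt_iff₀ hxy]
      rwa [inv_mul_lt_iff₀ hp] at hcon
    have h2 : η u < t⁻¹ := by
      have := eta_strictMono η h1
      simpa using this
    have h3 := h x z y u (by rw [hu, div_mul_cancel₀ _ hxy.ne'])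
    have h4 : nndist (f x) (f z) < t⁻¹ * nndist (f x) (f y) :=
      lt_of_le_of_lt h3 (by gcongr)
    rw [lt_inv_mul_iff₀ ht] at h4
    exact absurd hd (not_le.mpr h4)
  intro x y z t hd
  apply key
  simpa using hd

lemma tendsto_eta (η : ℝ≥0 ≃ₜ ℝ≥0) : Filter.Tendsto η (nhds 0) (nhds 0) := by
  have := η.continuous.tendsto 0
  rwa [eta_zero] at this

/-- for each ε there is a small `t`. -/
lemma exists_small (η : ℝ≥0 ≃ₜ ℝ≥0) {ε : ℝ} (hε : 0 < ε) : ∃ t : ℝ≥0, 0 < t ∧ (η t : ℝ) ≤ ε := by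
  refine ⟨η.symm ε.toNNReal, eta_pos _ (by simpa using hε), ?_⟩
  rw [Homeomorph.apply_symm_apply, Real.coe_toNNReal _ hε.le]

lemma qs_continuous {X X' : Type*} [MetricSpace X] [MetricSpace X'] {f : X → X'}
    (hf : IsQuasisymmetric f) : Continuous f := by
  obtain ⟨η, h⟩ := hf
  rw [Metric.continuous_iff]
  intro x ε hε
  by_cases hx : ∃ z, z ≠ x
  · obtain ⟨z, hz⟩ := hx
    have hd : 0 < dist x z := dist_pos.mpr hz.symm
    have hM : 0 < dist (f x) (f z) + 1 := by positivity
    obtain ⟨t, ht, hηt⟩ := exists_small η (show 0 < ε / 2 / (dist (f x) (f z) + 1) by positivity)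
    refine ⟨t * dist x z, by positivity, fun y hy => ?_⟩
    have h1 := qs_dist h (x := x) (y := y) (z := z) (t := t) (by rw [dist_comm]; exact hy.le)
    rw [dist_comm]
    calc dist (f x) (f y) ≤ η t * dist (f x) (f z) := h1
      _ ≤ ε / 2 / (dist (f x) (f z) + 1) * (dist (f x) (f z) + 1) := by
          gcongr; linarith
      _ = ε / 2 := by field_simp
      _ < ε := by linarith
  · push Not at hx
    exact ⟨1, one_pos, fun y _ => by rw [hx y]; simpa using hε⟩

lemma qs_cauchySeq {X X' : Type*} [MetricSpace X] [MetricSpace X'] {f : X → X'}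
    (hf : IsQuasisymmetric f) {u : ℕ → X} (hu : CauchySeq u) : CauchySeq (fun n => f (u n)) := by
  obtain ⟨η, h⟩ := hf
  by_cases hX : ∃ p q : X, p ≠ q
  swap
  · push Not at hX
    have : (fun n => f (u n)) = fun _ => f (u 0) := by
      funext n; rw [hX (u n) (u 0)]
    rw [this]
    exact tendsto_const_nhds.cauchySeq
  obtain ⟨p, q, hpq⟩ := hX
  have hdpq : 0 < dist p q := dist_pos.mpr hpq
  have key : ∃ p : X, ∃ ε > 0, ∃ N, ∀ n ≥ N, ε ≤ dist (u n) p := by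
    obtain ⟨N, hN⟩ := Metric.cauchySeq_iff'.mp hu (dist p q / 4) (by positivity)
    by_cases hc : dist p q / 2 ≤ dist (u N) p
    · refine ⟨p, dist p q / 4, by positivity, N, fun n hn => ?_⟩
      have h1 := hN n hn
      have h2 := dist_triangle (u N) (u n) p
      rw [dist_comm (u N) (u n)] at h2
      linarith
    · refine ⟨q, dist p q / 4, by positivity, N, fun n hn => ?_⟩
      have h1 := hN n hn
      have h2 := dist_triangle (u N) (u n) q
      have h3 := dist_triangle p (u N) q
      rw [dist_comm (u N) (u n)] at h2
      rw [dist_comm p (u N)] at h3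
      linarith
  obtain ⟨p, ε, hε, N, hN⟩ := key
  -- boundedness
  obtain ⟨B, hB0, hB⟩ : ∃ B > 0, ∀ n ≥ N, dist (f (u n)) (f p) ≤ B := by
    obtain ⟨R, hR0, hR⟩ := cauchySeq_bdd hu
    set t : ℝ≥0 := ⟨(R + dist (u N) p) / ε, by positivity⟩ with ht
    refine ⟨η t * dist (f p) (f (u N)) + 1, by positivity, fun n hn => ?_⟩
    have h1 := qs_dist h (x := p) (y := u n) (z := u N) (t := t) (by
      have h2 := dist_triangle p (u N) (u n)
      have h3 := hR N n
      have h4 := hN N le_rfl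
      rw [dist_comm p (u N)] at h2 ⊢
      calc dist p (u n) ≤ R + dist (u N) p := by linarith
        _ = (R + dist (u N) p) / ε * ε := by field_simp
        _ ≤ (R + dist (u N) p) / ε * dist (u N) p := by gcongr)
    rw [dist_comm]
    linarith
  rw [Metric.cauchySeq_iff]
  intro e he
  obtain ⟨t, ht, hηt⟩ := exists_small η (show 0 < e / 2 / B by positivity)
  obtain ⟨M, hM⟩ := Metric.cauchySeq_iff.mp hu (t * ε) (by positivity)
  refine ⟨max M N, fun m hm n hn => ?_⟩
  have hm1 : M ≤ m := le_trans (le_max_left _ _) hm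
  have hm2 : N ≤ m := le_trans (le_max_right _ _) hm
  have hn1 : M ≤ n := le_trans (le_max_left _ _) hn
  have h1 := qs_dist h (x := u m) (y := u n) (z := p) (t := t) (by
    have := hM m hm1 n hn1
    have h2 := hN m hm2
    calc dist (u m) (u n) ≤ t * ε := this.le
      _ ≤ t * dist (u m) p := by gcongr)
  calc dist (f (u m)) (f (u n)) ≤ η t * dist (f (u m)) (f p) := h1
    _ ≤ e / 2 / B * B := by
      gcongr
      exact hB m hm2
    _ = e / 2 := by field_simp
    _ < e := by linarith

lemma complete_of_qs {X X' : Type*} [MetricSpace X] [MetricSpace X'] [CompleteSpace X]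
    (f : X ≃ X') (hf : IsQuasisymmetric f) : CompleteSpace X' := by
  apply Metric.complete_of_cauchySeq_tendsto
  intro u hu
  obtain ⟨a, ha⟩ := cauchySeq_tendsto_of_complete (qs_cauchySeq (qs_symm f hf) hu)
  refine ⟨f a, ?_⟩
  have := (qs_continuous hf).continuousAt.tendsto.comp ha
  simpa [Function.comp_def] using this

lemma exists_homeo_pow (C α : ℝ) (hC : 0 < C) (hα : 0 < α) :
    ∃ η : ℝ≥0 ≃ₜ ℝ≥0, ∀ t : ℝ≥0, (η t : ℝ) = C * ((t : ℝ) ^ α + t) := by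
  set c : ℝ≥0 := ⟨C, hC.le⟩ with hc
  have hc0 : 0 < c := by exact_mod_cast hC
  obtain ⟨η, hη⟩ := exists_homeo_of_strictMono (fun t => c * (t ^ α + t)) (by
    intro a b hab
    have : a ^ α < b ^ α := NNReal.rpow_lt_rpow hab hα
    show c * (a ^ α + a) < c * (b ^ α + b)
    gcongr) (by
    intro y
    have hcont : Continuous (fun t : ℝ≥0 => c * (t ^ α + t)) := by
      have := NNReal.continuous_rpow_const (y := α) hα.le
      fun_prop
    refine mem_range_of_exists_le_of_exists_ge hcont ⟨0, ?_⟩ ⟨c⁻¹ * y, ?_⟩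
    · simp [hα.ne']
    · rw [mul_add, mul_inv_cancel_left₀ hc0.ne']
      exact le_add_of_nonneg_left zero_le)
  refine ⟨η, fun t => ?_⟩
  rw [hη]; push_cast; rfl

end PorousQS
end

section
open scoped NNReal ENNReal
namespace PorousQS

/-- Uniform perfectness with constant `K`. -/
def UnifPerf (Z : Type*) [MetricSpace Z] (K : ℝ) : Prop :=
  ∀ z : Z, ∀ r : ℝ, 0 < r → ENNReal.ofReal r ≤ Metric.ediam (Set.univ : Set Z) →
    ∃ u : Z, r / K ≤ dist z u ∧ dist z u < r

/-- The two sided Ahlfors bounds. -/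
def AhlMeas {W : Type*} [MetricSpace W] [MeasurableSpace W] (μ : MeasureTheory.Measure W)
    (C Q : ℝ) : Prop :=
  ∀ w : W, ∀ r : ℝ, 0 < r → ENNReal.ofReal r ≤ Metric.ediam (Set.univ : Set W) →
        ENNReal.ofReal (C⁻¹ * r ^ Q) ≤ μ (Metric.ball w r) ∧
          μ (Metric.ball w r) ≤ ENNReal.ofReal (C * r ^ Q)

lemma adm_mono {T : ℝ≥0∞} {r R : ℝ} (h : r ≤ R) (hR : ENNReal.ofReal R ≤ T) :
    ENNReal.ofReal r ≤ T := le_trans (ENNReal.ofReal_le_ofReal h) hR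

lemma ahlfors_unifPerf {W : Type*} [MetricSpace W] [MeasurableSpace W]
    {μ : MeasureTheory.Measure W} {C Q : ℝ} (hC : 1 ≤ C) (hQ : 0 < Q) (h : AhlMeas μ C Q) :
    ∃ K, 1 ≤ K ∧ UnifPerf W K := by
  have hC0 : 0 < C := by linarith
  refine ⟨(2 * C ^ 2) ^ (1 / Q), ?_, ?_⟩
  · apply Real.one_le_rpow
    · nlinarith
    · positivity
  set K := (2 * C ^ 2) ^ (1 / Q) with hK
  have hK1 : 1 ≤ K := by
    apply Real.one_le_rpow
    · nlinarith
    · positivity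
  have hK0 : 0 < K := by linarith
  have hKQ : K ^ Q = 2 * C ^ 2 := by
    rw [hK, ← Real.rpow_mul (by positivity)]
    rw [one_div_mul_cancel hQ.ne', Real.rpow_one]
  intro w r hr hrd
  by_contra hcon
  push Not at hcon
  have hsub : Metric.ball w r ⊆ Metric.ball w (r / K) := by
    intro u hu
    rw [Metric.mem_ball, dist_comm] at hu ⊢
    by_contra h1
    exact absurd hu (not_lt.mpr (hcon u (not_lt.mp h1)))
  have h1 := (h w r hr hrd).1
  have h2 := (h w (r / K) (by positivity) (adm_mono (div_le_self hr.le hK1) hrd)).2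
  have h3 := h1.trans ((MeasureTheory.measure_mono hsub).trans h2)
  have hrQ : 0 < r ^ Q := by positivity
  rw [ENNReal.ofReal_le_ofReal_iff (by positivity), Real.div_rpow hr.le hK0.le, hKQ] at h3
  have : C * (r ^ Q / (2 * C ^ 2)) = C⁻¹ * r ^ Q / 2 := by field_simp
  rw [this] at h3
  have : 0 < C⁻¹ * r ^ Q := by positivity
  linarith

lemma exists_far {Z : Type*} [MetricSpace Z] (z : Z) {r : ℝ} (hr : 0 < r)
    (hrd : ENNReal.ofReal r ≤ Metric.ediam (Set.univ : Set Z)) : ∃ v, r / 3 ≤ dist z v := by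
  by_contra hcon
  push Not at hcon
  have : Metric.ediam (Set.univ : Set Z) ≤ ENNReal.ofReal (2 * r / 3) := by
    apply Metric.ediam_le
    intro x _ y _
    rw [edist_dist]
    apply ENNReal.ofReal_le_ofReal
    have h1 := dist_triangle x z y
    rw [dist_comm x z] at h1
    linarith [hcon x, hcon y]
  have h2 := hrd.trans this
  rw [ENNReal.ofReal_le_ofReal_iff (by positivity)] at h2
  linarith

lemma dist_adm {Z : Type*} [MetricSpace Z] (x y : Z) :
    ENNReal.ofReal (dist x y) ≤ Metric.ediam (Set.univ : Set Z) := by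
  rw [← edist_dist]
  exact Metric.edist_le_ediam_of_mem (Set.mem_univ _) (Set.mem_univ _)

lemma unifPerf_transfer {W Z : Type*} [MetricSpace W] [MetricSpace Z] (k : W ≃ₜ Z)
    (hk : IsQuasisymmetric k) {KW : ℝ} (hKW : 1 ≤ KW) (hW : UnifPerf W KW) :
    ∃ K, 1 ≤ K ∧ UnifPerf Z K := by
  obtain ⟨η, hη⟩ := hk
  set t : ℝ≥0 := (2 * KW).toNNReal with ht
  have htv : (t : ℝ) = 2 * KW := Real.coe_toNNReal _ (by linarith)
  refine ⟨3 * (η t + 1), by have := (η t).2; push_cast; nlinarith [NNReal.coe_nonneg (η t)], ?_⟩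
  intro z r hr hrd
  obtain ⟨w, rfl⟩ := k.surjective z
  obtain ⟨v, hv⟩ := exists_far (k w) hr hrd
  -- the set of distances of outside points
  set S : Set ℝ := {d | ∃ u : W, r / 3 ≤ dist (k w) (k u) ∧ d = dist w u} with hS
  have hSne : S.Nonempty := ⟨_, k.symm v, by simpa using hv, rfl⟩
  have hSb : BddBelow S := ⟨0, by rintro _ ⟨u, _, rfl⟩; positivity⟩
  have hSpos : 0 < sInf S := by
    obtain ⟨δ, hδ, hδ'⟩ := Metric.continuous_iff.mp k.continuous w (r / 3) (by positivity)
    refine lt_of_lt_of_le hδ (le_csInf hSne ?_)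
    rintro _ ⟨u, hu, rfl⟩
    by_contra hlt
    have := hδ' u (by rw [dist_comm]; exact not_le.mp hlt)
    rw [dist_comm] at this
    linarith
  obtain ⟨_, ⟨u, hu, rfl⟩, hlt⟩ := exists_lt_of_csInf_lt hSne (show sInf S < 2 * sInf S by linarith)
  have hwu : 0 < dist w u := lt_of_lt_of_le hSpos (csInf_le hSb ⟨u, hu, rfl⟩)
  obtain ⟨x, hx1, hx2⟩ := hW w (dist w u / 2) (by positivity)
    (adm_mono (by linarith) (dist_adm w u))
  have hxS : dist w x < sInf S := by linarith
  have hin : dist (k w) (k x) < r / 3 := by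
    by_contra hge
    exact absurd hxS (not_lt.mpr (csInf_le hSb ⟨x, not_lt.mp hge, rfl⟩))
  refine ⟨k x, ?_, by linarith⟩
  have h1 := qs_dist hη (x := w) (y := u) (z := x) (t := t) (by
    rw [htv]
    have : dist w u / 2 ≤ KW * dist w x := by
      rwa [div_le_iff₀ (by linarith), mul_comm] at hx1
    linarith)
  have hη0 : (0:ℝ) ≤ η t := NNReal.coe_nonneg _
  rw [div_le_iff₀ (by positivity)]
  have h2 : (0:ℝ) ≤ dist (k w) (k x) := dist_nonneg
  nlinarith

/-- Porosity is a quasisymmetric invariant. -/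
lemma porous_transfer {X W : Type*} [MetricSpace X] [MetricSpace W] (f : X ≃ₜ W)
    (hf : IsQuasisymmetric f) {K : ℝ} (hK : 1 ≤ K) (hW : UnifPerf W K) {Y : Set X}
    (hY : Porous Y) : Porous (f '' Y) := by
  obtain ⟨η, hη⟩ := hf
  obtain ⟨c, hc, hY⟩ := hY
  obtain ⟨l', hl'0, hl'⟩ := exists_small η one_pos
  set l : ℝ≥0 := min l' 1 with hl
  have hl0 : 0 < l := lt_min hl'0 one_pos
  have hl1 : (l:ℝ) ≤ 1 := by exact_mod_cast min_le_right _ _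
  have hηl : (η l : ℝ) ≤ 1 := le_trans (by
    exact_mod_cast (eta_strictMono η).monotone (min_le_left _ _)) hl'
  have hl0' : (0:ℝ) < l := by exact_mod_cast hl0
  set M : ℝ≥0 := ((1 + 1 / l) / c).toNNReal with hM
  have hMv : (M:ℝ) = (1 + 1 / l) / c := Real.coe_toNNReal _ (by positivity)
  have hM0 : 0 < M := by
    rw [← NNReal.coe_pos, hMv]; positivity
  have hηM : (0:ℝ) < η M := by exact_mod_cast eta_pos η hM0
  refine ⟨1 / (2 * K * η M), by positivity, ?_⟩
  rintro _ ⟨y, hyY, rfl⟩ r hr hrd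
  obtain ⟨w, hw1, hw2⟩ := hW (f y) r hr hrd
  obtain ⟨u, rfl⟩ := f.surjective w
  have hyu' : 0 < dist (f y) (f u) := lt_of_lt_of_le (by positivity) hw1
  have hyu : 0 < dist y u := by
    rw [dist_pos] at hyu' ⊢
    exact fun e => hyu' (by rw [e])
  set R := l * dist y u with hR
  have hR0 : 0 < R := by positivity
  obtain ⟨x, hx⟩ := hY y hyY R hR0 (adm_mono (by nlinarith) (dist_adm y u))
  have hxb : x ∈ Metric.ball y R \ Y := hx (Metric.mem_ball_self (by positivity))
  have hxR : dist x y < R := hxb.1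
  have sub1 : ∀ v, dist v y < R → dist (f v) (f y) < r := by
    intro v hv
    have := qs_dist hη (x := y) (y := v) (z := u) (t := l) (by rw [dist_comm]; exact hv.le)
    rw [dist_comm]
    calc dist (f y) (f v) ≤ η l * dist (f y) (f u) := this
      _ ≤ 1 * dist (f y) (f u) := by gcongr
      _ < r := by linarith
  refine ⟨f x, ?_⟩
  intro w' hw'
  obtain ⟨v, rfl⟩ := f.surjective w'
  have hv : v ∈ Metric.ball x (c * R) := by
    by_contra hv
    rw [Metric.mem_ball, not_lt, dist_comm] at hv
    have e1 : R ≤ dist x v / c := by rw [le_div_iff₀ hc]; linarith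
    have e2 : dist x y ≤ M * dist x v := by
      rw [hMv]
      calc dist x y ≤ dist x v / c := by linarith
        _ = 1 / c * dist x v := by ring
        _ ≤ (1 + 1 / l) / c * dist x v := by
          gcongr
          have : 0 < 1 / (l:ℝ) := by positivity
          linarith
    have e3 : dist x u ≤ M * dist x v := by
      rw [hMv]
      have := dist_triangle x y u
      have e4 : dist y u = 1 / l * R := by rw [hR]; field_simp
      calc dist x u ≤ R + 1 / l * R := by linarith
        _ = (1 + 1 / l) * R := by ring
        _ ≤ (1 + 1 / l) * (dist x v / c) := by gcongr
        _ = _ := by ring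
    have g1 := qs_dist hη e2
    have g2 := qs_dist hη e3
    have g3 := dist_triangle (f y) (f x) (f u)
    rw [dist_comm (f y) (f x)] at g3
    have g4 : r / K ≤ 2 * η M * dist (f x) (f v) := by linarith
    rw [Metric.mem_ball, dist_comm] at hw'
    have g5 : 2 * η M * dist (f x) (f v) < 2 * η M * (1 / (2 * K * η M) * r) := by gcongr
    have hK0 : 0 < K := by linarith
    have g6 : 2 * η M * (1 / (2 * K * η M) * r) = r / K := by field_simp
    linarith
  have hv2 := hx hv
  refine ⟨sub1 v hv2.1, ?_⟩
  rintro ⟨v', hv', e⟩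
  exact hv2.2 (f.injective e ▸ hv')

end PorousQS
end

section
open scoped NNReal ENNReal
open MeasureTheory
namespace PorousQS

lemma packing {W : Type*} [MetricSpace W] [MeasurableSpace W] [BorelSpace W]
    {μ : Measure W} {C Q : ℝ} (hC : 1 ≤ C) (h : AhlMeas μ C Q)
    {r t t' : ℝ} (hr : 0 < r) (ht : t' + r / 2 ≤ t) (ht0 : r / 2 ≤ t)
    (htd : ENNReal.ofReal t ≤ Metric.ediam (Set.univ : Set W)) (w : W)
    (A : Finset W) (hA : ∀ a ∈ A, dist a w < t')
    (hsep : ∀ a ∈ A, ∀ b ∈ A, a ≠ b → r ≤ dist a b) :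
    (A.card : ℝ) * (C⁻¹ * (r / 2) ^ Q) ≤ C * t ^ Q := by
  have hC0 : 0 < C := by linarith
  have ht00 : 0 < t := by linarith
  have h1 : ∑ a ∈ A, μ (Metric.ball a (r / 2)) = μ (⋃ a ∈ A, Metric.ball a (r / 2)) := by
    rw [measure_biUnion_finset]
    · intro a ha b hb hab
      exact Metric.ball_disjoint_ball (by linarith [hsep a ha b hb hab])
    · intro a _; exact Metric.isOpen_ball.measurableSet
  have h2 : (⋃ a ∈ A, Metric.ball a (r / 2)) ⊆ Metric.ball w t := by
    intro z hz
    simp only [Set.mem_iUnion, Metric.mem_ball] at hz ⊢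
    obtain ⟨a, ha, hz⟩ := hz
    linarith [dist_triangle z a w, hA a ha]
  have h3 : ∑ a ∈ A, ENNReal.ofReal (C⁻¹ * (r / 2) ^ Q) ≤ ENNReal.ofReal (C * t ^ Q) := by
    calc _ ≤ ∑ a ∈ A, μ (Metric.ball a (r / 2)) :=
          Finset.sum_le_sum fun a _ => (h a (r / 2) (by positivity) (adm_mono ht0 htd)).1
      _ = _ := h1
      _ ≤ μ (Metric.ball w t) := measure_mono h2
      _ ≤ _ := (h w t ht00 htd).2
  rw [Finset.sum_const, nsmul_eq_mul, ← ENNReal.ofReal_natCast,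
    ← ENNReal.ofReal_mul (by positivity), ENNReal.ofReal_le_ofReal_iff (by positivity)] at h3
  exact h3

lemma shell_bound {W : Type*} [MetricSpace W] [MeasurableSpace W] [BorelSpace W]
    {μ : Measure W} {C Q : ℝ} (hC : 1 ≤ C) (h : AhlMeas μ C Q)
    {Y : Set W} {c : ℝ} (hc : 0 < c) (hc1 : c ≤ 1)
    (hY : ∀ y ∈ Y, ∀ r : ℝ, 0 < r → ENNReal.ofReal r ≤ Metric.ediam (Set.univ : Set W) →
      ∃ x : W, Metric.ball x (c * r) ⊆ Metric.ball y r \ Y)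
    {r t R : ℝ} (hr : 0 < r) (hrt : r ≤ t) (htR : t ≤ R)
    (hRd : ENNReal.ofReal (2 * R) ≤ Metric.ediam (Set.univ : Set W)) (x : W)
    (A : Finset W) (hA : ∀ a ∈ A, dist a x < R) (hAY : ∀ a ∈ A, a ∈ Y)
    (hsep : ∀ a ∈ A, ∀ b ∈ A, a ≠ b → r ≤ dist a b) :
    ENNReal.ofReal (A.card * r ^ Q * (C⁻¹ ^ 3 * (c / 8) ^ Q)) ≤
      μ ({w | c * t / 4 ≤ Metric.infDist w Y ∧ Metric.infDist w Y < t / 2} ∩ Metric.ball x (2 * R)) := by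
  have hC0 : 0 < C := by linarith
  have ht : 0 < t := by linarith
  set S := {w | c * t / 4 ≤ Metric.infDist w Y ∧ Metric.infDist w Y < t / 2} ∩ Metric.ball x (2 * R)
    with hS
  have hSm : MeasurableSet S := by
    refine MeasurableSet.inter ?_ Metric.isOpen_ball.measurableSet
    have hcont := (Metric.continuous_infDist_pt (s := Y)).measurable
    exact (measurableSet_le measurable_const hcont).inter (measurableSet_lt hcont measurable_const)
  have hol : ∀ a ∈ A, ∃ u : W, Metric.ball u (c * (t / 2)) ⊆ Metric.ball a (t / 2) \ Y := by
    intro a ha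
    exact hY a (hAY a ha) (t / 2) (by positivity) (adm_mono (by linarith) hRd)
  choose! u hu using hol
  set H : W → Set W := fun a => Metric.ball (u a) (c * t / 4) with hH
  have hHS : ∀ a ∈ A, H a ⊆ S ∩ Metric.ball a (t / 2) := by
    intro a ha w hw
    have hw' : dist w (u a) < c * t / 4 := hw
    have hwb := hu a ha (show w ∈ Metric.ball (u a) (c * (t / 2)) by
      rw [Metric.mem_ball]
      have : 0 < c * t := by positivity
      linarith)
    have hwa : dist w a < t / 2 := hwb.1
    refine ⟨⟨⟨?_, ?_⟩, ?_⟩, hwa⟩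
    · rw [Metric.le_infDist ⟨a, hAY a ha⟩]
      intro y hy
      by_contra hlt
      have : y ∈ Metric.ball (u a) (c * (t / 2)) := by
        rw [Metric.mem_ball]
        have := dist_triangle_left y (u a) w
        linarith
      exact (hu a ha this).2 hy
    · exact lt_of_le_of_lt (Metric.infDist_le_dist_of_mem (hAY a ha)) hwa
    · rw [Metric.mem_ball]
      linarith [dist_triangle w a x, hA a ha]
  set P : ℝ := C ^ 2 * (2 * t / r) ^ Q with hP
  have hPc : ∀ w, (((A.filter fun a => dist a w < t / 2).card : ℕ) : ℝ) ≤ P := by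
    intro w
    have := packing hC h (t := t) (t' := t / 2) hr (by linarith) (by linarith)
      (adm_mono (by linarith) hRd) w
      (A.filter fun a => dist a w < t / 2) (fun a ha => (Finset.mem_filter.mp ha).2)
      (fun a ha b hb hab => hsep a (Finset.mem_filter.mp ha).1 b (Finset.mem_filter.mp hb).1 hab)
    have hrQ : 0 < (r / 2) ^ Q := by positivity
    have e : (2 * t / r) ^ Q = t ^ Q / (r / 2) ^ Q := by
      rw [← Real.div_rpow (by positivity) (by positivity)]
      congr 1; field_simp
    rw [hP, e]
    rw [← le_div_iff₀ (by positivity)] at this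
    refine this.trans (le_of_eq ?_)
    field_simp
  have hP0 : 0 ≤ P := by positivity
  have hIntg : ∑ a ∈ A, μ (H a) ≤ ENNReal.ofReal P * μ S := by
    calc ∑ a ∈ A, μ (H a) = ∑ a ∈ A, ∫⁻ w, (H a).indicator 1 w ∂μ := by
          refine Finset.sum_congr rfl fun a _ => ?_
          rw [lintegral_indicator_one Metric.isOpen_ball.measurableSet]
      _ = ∫⁻ w, ∑ a ∈ A, (H a).indicator 1 w ∂μ := by
          rw [lintegral_finsetSum]
          intro a _
          exact measurable_one.indicator Metric.isOpen_ball.measurableSet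
      _ ≤ ∫⁻ w, S.indicator (fun _ => ENNReal.ofReal P) w ∂μ := by
          refine lintegral_mono fun w => ?_
          by_cases hw : w ∈ S
          · rw [Set.indicator_of_mem hw]
            calc ∑ a ∈ A, (H a).indicator (1 : W → ℝ≥0∞) w
                ≤ ∑ a ∈ A, (if dist a w < t / 2 then 1 else 0 : ℝ≥0∞) := by
                  refine Finset.sum_le_sum fun a ha => ?_
                  by_cases hwa : w ∈ H a
                  · have := (hHS a ha hwa).2
                    rw [Metric.mem_ball, dist_comm] at this
                    rw [Set.indicator_of_mem hwa, if_pos this]; rfl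
                  · rw [Set.indicator_of_notMem hwa]; exact zero_le
              _ = ((A.filter fun a => dist a w < t / 2).card : ℝ≥0∞) := by
                  rw [Finset.sum_boole]
              _ ≤ ENNReal.ofReal P := by
                  rw [← ENNReal.ofReal_natCast]
                  exact ENNReal.ofReal_le_ofReal (hPc w)
          · rw [Set.indicator_of_notMem hw]
            apply le_of_eq
            refine Finset.sum_eq_zero fun a ha => ?_
            exact Set.indicator_of_notMem (fun hwa => hw (hHS a ha hwa).1) _
      _ = _ := by rw [lintegral_indicator_const hSm]
  have hlow : ENNReal.ofReal (A.card * (C⁻¹ * (c * t / 4) ^ Q)) ≤ ∑ a ∈ A, μ (H a) := by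
    rw [ENNReal.ofReal_mul (by positivity), ENNReal.ofReal_natCast, ← nsmul_eq_mul,
      ← Finset.sum_const]
    refine Finset.sum_le_sum fun a _ => (h (u a) (c * t / 4) (by positivity) (adm_mono ?_ hRd)).1
    nlinarith
  have hPpos : 0 < P := by positivity
  have hfin := hlow.trans hIntg
  have e1 : A.card * r ^ Q * (C⁻¹ ^ 3 * (c / 8) ^ Q) = P⁻¹ * (A.card * (C⁻¹ * (c * t / 4) ^ Q)) := by
    have e2 : (c * t / 4) ^ Q = (c / 8) ^ Q * (2 * t / r) ^ Q * r ^ Q := by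
      rw [← Real.mul_rpow (by positivity) (by positivity),
        ← Real.mul_rpow (by positivity) (by positivity)]
      congr 1; field_simp; norm_num
    have : 0 < (2 * t / r) ^ Q := by positivity
    rw [e2, hP]; field_simp
  rw [e1, ENNReal.ofReal_mul (by positivity), ENNReal.ofReal_inv_of_pos hPpos]
  rw [ENNReal.inv_mul_le_iff (by simpa using hPpos) ENNReal.ofReal_ne_top]
  exact hfin

lemma counting {W : Type*} [MetricSpace W] [MeasurableSpace W] [BorelSpace W]
    {μ : Measure W} {C Q : ℝ} (hC : 1 ≤ C) (hQ : 0 < Q) (h : AhlMeas μ C Q)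
    {Y : Set W} (hY : Porous Y) :
    ∃ (ρ : ℝ) (N : ℕ), 0 < ρ ∧ ρ ≤ 1 / 20 ∧ 2 ≤ N ∧ N * ρ ^ Q < 1 ∧
      ∀ (x : W) (R : ℝ), 0 < R → ENNReal.ofReal (2 * R) ≤ Metric.ediam (Set.univ : Set W) →
        ∀ A : Finset W, (∀ a ∈ A, dist a x < R) → (∀ a ∈ A, a ∈ Y) →
        (∀ a ∈ A, ∀ b ∈ A, a ≠ b → ρ * R ≤ dist a b) → A.card ≤ N := by
  obtain ⟨c', hc', hY'⟩ := hY
  set c := min c' 1 with hcdef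
  have hc : 0 < c := lt_min hc' one_pos
  have hc1 : c ≤ 1 := min_le_right _ _
  have hYc : ∀ y ∈ Y, ∀ r : ℝ, 0 < r → ENNReal.ofReal r ≤ Metric.ediam (Set.univ : Set W) →
      ∃ x : W, Metric.ball x (c * r) ⊆ Metric.ball y r \ Y := by
    intro y hy r hr hrd
    obtain ⟨x, hx⟩ := hY' y hy r hr hrd
    refine ⟨x, (Metric.ball_subset_ball ?_).trans hx⟩
    gcongr
    exact min_le_left _ _
  have hC0 : 0 < C := by linarith
  set q := min (c / 2) (1 / 20) with hq
  have hq0 : 0 < q := lt_min (by positivity) (by norm_num)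
  have hqc : q ≤ c / 2 := min_le_left _ _
  have hq20 : q ≤ 1 / 20 := min_le_right _ _
  have hq1 : q < 1 := by linarith
  set κ := C⁻¹ ^ 3 * (c / 8) ^ Q with hκ
  have hκ0 : 0 < κ := by positivity
  set B := C * 2 ^ Q / κ with hB
  have hB0 : 0 < B := by positivity
  -- choose n
  obtain ⟨n, hn1, hnB, hnq⟩ : ∃ n : ℕ, 1 ≤ n ∧ B < n ∧ 2 * (q ^ n) ^ Q < 1 := by
    have hqQ : q ^ Q < 1 := Real.rpow_lt_one hq0.le hq1 hQ
    have e1 : ∀ᶠ n : ℕ in Filter.atTop, (q ^ Q) ^ n < 1 / 2 :=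
      (tendsto_pow_atTop_nhds_zero_of_lt_one (by positivity) hqQ).eventually_lt_const (by norm_num)
    have e2 : ∀ᶠ n : ℕ in Filter.atTop, B < n :=
      tendsto_natCast_atTop_atTop.eventually_gt_atTop B
    obtain ⟨n, h1, h2, h3⟩ := (e1.and (e2.and (Filter.eventually_ge_atTop 1))).exists
    refine ⟨n, h3, h2, ?_⟩
    have : (q ^ n) ^ Q = (q ^ Q) ^ n := by
      rw [← Real.rpow_natCast, ← Real.rpow_natCast, ← Real.rpow_mul hq0.le,
        ← Real.rpow_mul hq0.le, mul_comm]
    rw [this]; linarith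
  set ρ := q ^ n with hρ
  have hρ0 : 0 < ρ := by positivity
  have hn0 : (0:ℝ) < n := by exact_mod_cast hn1
  have hρQ : 0 < ρ ^ Q := by positivity
  refine ⟨ρ, max 2 ⌊B / n * (ρ ^ Q)⁻¹⌋₊, hρ0, ?_, le_max_left _ _, ?_, ?_⟩
  · calc q ^ n ≤ q ^ 1 := pow_le_pow_of_le_one hq0.le hq1.le hn1
      _ ≤ 1 / 20 := by simpa using hq20
  · rw [Nat.cast_max, max_mul_of_nonneg _ _ hρQ.le]
    apply max_lt
    · exact_mod_cast hnq
    · calc (⌊B / n * (ρ ^ Q)⁻¹⌋₊ : ℝ) * ρ ^ Q ≤ (B / n * (ρ ^ Q)⁻¹) * ρ ^ Q := by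
            gcongr; exact Nat.floor_le (by positivity)
        _ = B / n := by field_simp
        _ < 1 := by rwa [div_lt_one hn0]
  · intro x R hR hRd A hAx hAY hsep
    apply le_trans _ (le_max_right _ _)
    apply Nat.le_floor
    set S : ℕ → Set W := fun j => {w | c * (q ^ j * R) / 4 ≤ Metric.infDist w Y ∧
      Metric.infDist w Y < (q ^ j * R) / 2} ∩ Metric.ball x (2 * R) with hS
    have hSm : ∀ j, MeasurableSet (S j) := by
      intro j
      refine MeasurableSet.inter ?_ Metric.isOpen_ball.measurableSet
      have hcont := (Metric.continuous_infDist_pt (s := Y)).measurable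
      exact (measurableSet_le measurable_const hcont).inter (measurableSet_lt hcont measurable_const)
    have hlt : ∀ i j : ℕ, i < j → Disjoint (S i) (S j) := by
      intro i j hij
      rw [Set.disjoint_left]
      rintro w ⟨⟨h1, _⟩, _⟩ ⟨⟨_, h2⟩, _⟩
      have h3 : q ^ j ≤ q ^ (i + 1) := pow_le_pow_of_le_one hq0.le hq1.le hij
      have h4 : q ^ j * R ≤ (c / 2) * (q ^ i * R) := by
        calc q ^ j * R ≤ q ^ (i + 1) * R := by gcongr
          _ = q * (q ^ i * R) := by ring
          _ ≤ _ := by gcongr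
      linarith
    have hdis : Set.PairwiseDisjoint (↑(Finset.Icc 1 n)) S := by
      intro i _ j _ hij
      rcases lt_or_gt_of_ne hij with h1 | h1
      · exact hlt i j h1
      · exact (hlt j i h1).symm
    have hsum : ∑ j ∈ Finset.Icc 1 n, μ (S j) ≤ ENNReal.ofReal (C * (2 * R) ^ Q) := by
      rw [← measure_biUnion_finset hdis (fun j _ => hSm j)]
      refine (measure_mono ?_).trans (h x (2 * R) (by positivity) hRd).2
      intro w hw
      simp only [Set.mem_iUnion] at hw
      obtain ⟨j, _, hj⟩ := hw
      exact hj.2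
    have hlow : ∑ j ∈ Finset.Icc 1 n, ENNReal.ofReal (A.card * (ρ * R) ^ Q * κ) ≤
        ∑ j ∈ Finset.Icc 1 n, μ (S j) := by
      refine Finset.sum_le_sum fun j hj => ?_
      rw [Finset.mem_Icc] at hj
      refine shell_bound hC h hc hc1 hYc (r := ρ * R) (t := q ^ j * R) (R := R) (by positivity)
        ?_ ?_ hRd x A hAx hAY hsep
      · have : ρ ≤ q ^ j := pow_le_pow_of_le_one hq0.le hq1.le hj.2
        gcongr
      · have : q ^ j ≤ 1 := pow_le_one₀ hq0.le hq1.le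
        nlinarith
    have hfin := hlow.trans hsum
    rw [Finset.sum_const, nsmul_eq_mul, Nat.card_Icc, Nat.add_sub_cancel, ← ENNReal.ofReal_natCast,
      ← ENNReal.ofReal_mul (by positivity), ENNReal.ofReal_le_ofReal_iff (by positivity),
      Real.mul_rpow hρ0.le hR.le, Real.mul_rpow (by norm_num) hR.le] at hfin
    have hRQ : 0 < R ^ Q := by positivity
    rw [hB]
    have e : C * 2 ^ Q / κ / n * (ρ ^ Q)⁻¹ = (C * (2 ^ Q * R ^ Q)) / (n * (ρ ^ Q * R ^ Q) * κ) := by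
      field_simp
    rw [e, le_div_iff₀ (by positivity)]
    calc (A.card : ℝ) * (n * (ρ ^ Q * R ^ Q) * κ) = n * (A.card * (ρ ^ Q * R ^ Q) * κ) := by ring
      _ ≤ _ := hfin

end PorousQS
end

section
open scoped NNReal ENNReal
open MeasureTheory
namespace PorousQS

/-- The counting condition at relative scale `ρ`. -/
def Count (Z : Type*) [MetricSpace Z] (ρ : ℝ) (N : ℕ) (T : ℝ≥0∞) : Prop :=
  ∀ (x : Z) (R : ℝ), 0 < R → ENNReal.ofReal R ≤ T → ∀ A : Finset Z, (∀ a ∈ A, dist a x < R) →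
    (∀ a ∈ A, ∀ b ∈ A, a ≠ b → ρ * R ≤ dist a b) → A.card ≤ N

lemma finite_of_card_le {Z : Type*} {S : Set Z} {N : ℕ}
    (h : ∀ A : Finset Z, (∀ a ∈ A, a ∈ S) → A.card ≤ N) : S.Finite ∧ S.ncard ≤ N := by
  have hf : S.Finite := by
    by_contra hinf
    obtain ⟨A, hA, hc⟩ := Set.Infinite.exists_subset_card_eq hinf (N + 1)
    have := h A (fun a ha => hA ha)
    omega
  refine ⟨hf, ?_⟩
  rw [Set.ncard_eq_toFinset_card S hf]
  exact h _ (fun a ha => hf.mem_toFinset.mp ha)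

/-- A set is `ε`-separated. -/
def Sep {Z : Type*} [MetricSpace Z] (S : Set Z) (ε : ℝ) : Prop :=
  ∀ a ∈ S, ∀ b ∈ S, a ≠ b → ε ≤ dist a b

lemma exists_max_sep {Z : Type*} [MetricSpace Z] (S₀ : Set Z) (ε : ℝ) (hε : 0 < ε) :
    ∃ S, Sep S₀ ε → S₀ ⊆ S ∧ Sep S ε ∧ ∀ z, ∃ a ∈ S, dist z a < ε := by
  by_cases h0 : Sep S₀ ε
  swap
  · exact ⟨∅, fun h => absurd h h0⟩
  obtain ⟨S, hS0, hS⟩ := zorn_subset_nonempty {S : Set Z | Sep S ε} (by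
    intro c hc hchain _
    refine ⟨⋃₀ c, ?_, fun s hs => Set.subset_sUnion_of_mem hs⟩
    rintro a ⟨s, hs, ha⟩ b ⟨t, ht, hb⟩ hab
    rcases hchain.total hs ht with hst | hts
    · exact hc ht a (hst ha) b hb hab
    · exact hc hs a ha b (hts hb) hab) S₀ h0
  refine ⟨S, fun _ => ⟨hS0, hS.prop, fun z => ?_⟩⟩
  by_contra hcon
  push Not at hcon
  have hins : Sep (insert z S) ε := by
    rintro a (rfl | ha) b (rfl | hb) hab
    · exact absurd rfl hab
    · exact hcon b hb
    · rw [dist_comm]; exact hcon a ha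
    · exact hS.prop a ha b hb hab
  have hz : z ∈ S := hS.le_of_ge hins (Set.subset_insert _ _) (Set.mem_insert _ _)
  have := hcon z hz
  rw [dist_self] at this
  linarith

/-- Hierarchy of nets with weights. -/
structure Tree (Z : Type*) [MetricSpace Z] (ρ : ℝ) (N : ℕ) (L : ℝ) where
  S : ℕ → Set Z
  P : ℕ → Z → Z
  w : ℕ → Z → ℝ
  sep : ∀ j, Sep (S j) (ρ ^ j * L)
  dense : ∀ j z, ∃ a ∈ S j, dist z a < ρ ^ j * L
  P_mem : ∀ j z, P j z ∈ S j
  P_dist : ∀ j z, dist z (P j z) < ρ ^ j * L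
  P_near : ∀ j z, ∀ b ∈ S j, dist z b < ρ ^ j * L / 2 → P j z = b
  w_zero : ∀ x ∈ S 0, w 0 x = 1
  w_nonneg : ∀ j x, 0 ≤ w j x
  w_off : ∀ j x, x ∉ S j → w j x = 0
  w_lower : ∀ j, ∀ y ∈ S (j + 1), w j (P j y) ≤ N * w (j + 1) y
  w_upper : ∀ j, ∀ y ∈ S (j + 1), w (j + 1) y ≤ w j (P j y)
  w_nc : ∀ j, ∀ y ∈ S (j + 1), P j y ≠ y → N * w (j + 1) y = w j (P j y)
  w_sum : ∀ j x, ∃ F : Finset Z, (∀ y, y ∈ F ↔ y ∈ S (j + 1) ∧ P j y = x) ∧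
    ∑ y ∈ F, w (j + 1) y = w j x

open Classical in
lemma exists_tree {Z : Type*} [MetricSpace Z] {ρ : ℝ} {N : ℕ} {T : ℝ≥0∞} (hρ : 0 < ρ)
    (hρ1 : ρ ≤ 1 / 20) (hN : 2 ≤ N) (hc : Count Z ρ N T) {L : ℝ} (hL : 0 < L)
    (hLT : ENNReal.ofReal (L / ρ) ≤ T) : Nonempty (Tree Z ρ N L) := by
  have hε : ∀ j : ℕ, 0 < ρ ^ j * L := fun j => by positivity
  have hεs : ∀ j : ℕ, ρ ^ (j + 1) * L ≤ ρ ^ j * L := by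
    intro j
    have : ρ ^ (j + 1) ≤ ρ ^ j := pow_le_pow_of_le_one hρ.le (by linarith) (Nat.le_succ j)
    gcongr
  have hmax : ∀ (S₀ : Set Z) (j : ℕ), ∃ S, Sep S₀ (ρ ^ j * L) →
      S₀ ⊆ S ∧ Sep S (ρ ^ j * L) ∧ ∀ z, ∃ a ∈ S, dist z a < ρ ^ j * L :=
    fun S₀ j => exists_max_sep S₀ _ (hε j)
  choose F hF using hmax
  obtain ⟨S, hS0, hSs⟩ : ∃ S : ℕ → Set Z, S 0 = F ∅ 0 ∧ ∀ j, S (j + 1) = F (S j) (j + 1) :=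
    ⟨fun j => Nat.rec (motive := fun _ => Set Z) (F ∅ 0) (fun j Sj => F Sj (j + 1)) j,
      rfl, fun _ => rfl⟩
  have hall : ∀ j, Sep (S j) (ρ ^ j * L) ∧ ∀ z, ∃ a ∈ S j, dist z a < ρ ^ j * L := by
    intro j
    induction j with
    | zero =>
      rw [hS0]
      exact (hF ∅ 0 (fun a ha => absurd ha (Set.notMem_empty a))).2
    | succ j ih =>
      rw [hSs]
      exact (hF (S j) (j + 1) (fun a ha b hb hab => (hεs j).trans (ih.1 a ha b hb hab))).2
  have hnest : ∀ j, S j ⊆ S (j + 1) := by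
    intro j
    rw [hSs]
    exact (hF (S j) (j + 1) (fun a ha b hb hab => (hεs j).trans ((hall j).1 a ha b hb hab))).1
  have hP : ∀ (j : ℕ) (z : Z), ∃ a ∈ S j, dist z a < ρ ^ j * L ∧
      ∀ b ∈ S j, dist z b < ρ ^ j * L / 2 → a = b := by
    intro j z
    rcases Classical.em (∃ a ∈ S j, dist z a < ρ ^ j * L / 2) with hex | hex
    · obtain ⟨a, ha, hd⟩ := hex
      refine ⟨a, ha, by linarith [hε j], fun b hb hbd => ?_⟩
      by_contra hab
      have := (hall j).1 a ha b hb hab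
      have h2 := dist_triangle_left a b z
      linarith
    · push Not at hex
      obtain ⟨a, ha, hd⟩ := (hall j).2 z
      exact ⟨a, ha, hd, fun b hb hbd => absurd hbd (not_lt.mpr (hex b hb))⟩
  choose P hPm hPd hPn using hP
  have hPself : ∀ j, ∀ x ∈ S j, P j x = x := fun j x hx =>
    hPn j x x hx (by rw [dist_self]; have := hε j; positivity)
  let Ch : ℕ → Z → Set Z := fun j x => {y | y ∈ S (j + 1) ∧ P j y = x}
  have hCh : ∀ j x, (Ch j x).Finite ∧ (Ch j x).ncard ≤ N := by
    intro j x
    apply finite_of_card_le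
    intro A hA
    apply hc x (ρ ^ j * L) (hε j) (adm_mono ?_ hLT) A
    · intro a ha
      have := hPd j a
      rwa [(hA a ha).2] at this
    · intro a ha b hb hab
      have := (hall (j + 1)).1 a (hA a ha).1 b (hA b hb).1 hab
      calc ρ * (ρ ^ j * L) = ρ ^ (j + 1) * L := by ring
        _ ≤ _ := this
    · rw [le_div_iff₀ hρ]
      have : ρ ^ j ≤ 1 := pow_le_one₀ hρ.le (by linarith)
      calc ρ ^ j * L * ρ ≤ 1 * L * 1 := by gcongr; linarith
        _ = L := by ring
  have hN0 : (0:ℝ) < N := by positivity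
  let w₀ : Z → ℝ := fun x => if x ∈ S 0 then (1:ℝ) else 0
  let wst : ℕ → (Z → ℝ) → Z → ℝ := fun j wj y => if y ∈ S (j + 1) then
      (if y ∈ S j then wj y * (1 - (((Ch j y).ncard : ℝ) - 1) / N) else wj (P j y) / N) else (0:ℝ)
  let w : ℕ → Z → ℝ := fun j => Nat.rec (motive := fun _ => Z → ℝ) w₀ wst j
  have hw0 : ∀ x, w 0 x = if x ∈ S 0 then 1 else 0 := fun x => rfl
  have hws : ∀ j y, w (j + 1) y = if y ∈ S (j + 1) then
      (if y ∈ S j then w j y * (1 - (((Ch j y).ncard : ℝ) - 1) / N) else w j (P j y) / N) else 0 :=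
    fun j y => rfl
  have hfac : ∀ j x, x ∈ S j → (1:ℝ) / N ≤ 1 - (((Ch j x).ncard : ℝ) - 1) / N ∧
      1 - (((Ch j x).ncard : ℝ) - 1) / N ≤ 1 := by
    intro j x hx
    have h1 : ((Ch j x).ncard : ℝ) ≤ N := by exact_mod_cast (hCh j x).2
    have h2 : (1:ℝ) ≤ (Ch j x).ncard := by
      have : 0 < (Ch j x).ncard := by
        rw [Set.ncard_pos (hCh j x).1]
        exact ⟨x, hnest j hx, hPself j x hx⟩
      exact_mod_cast this
    constructor
    · have : 1 - (((Ch j x).ncard : ℝ) - 1) / N = (N - ((Ch j x).ncard - 1)) / N := by field_simp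
      rw [this]; gcongr; linarith
    · have : 0 ≤ (((Ch j x).ncard : ℝ) - 1) / N := div_nonneg (by linarith) hN0.le
      linarith
  have hwnn : ∀ j x, 0 ≤ w j x := by
    intro j
    induction j with
    | zero => intro x; rw [hw0]; split_ifs <;> norm_num
    | succ j ih =>
      intro x
      rw [hws]
      split_ifs with h1 h2
      · have := (hfac j x h2).1
        have h3 : (0:ℝ) < 1 / N := by positivity
        exact mul_nonneg (ih x) (by linarith)
      · exact div_nonneg (ih _) hN0.le
      · exact le_rfl
  have hoff : ∀ j x, x ∉ S j → w j x = 0 := by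
    intro j x hx
    cases j with
    | zero => rw [hw0, if_neg hx]
    | succ j => rw [hws, if_neg hx]
  refine ⟨⟨S, P, w, fun j => (hall j).1, fun j => (hall j).2, hPm, hPd,
    fun j z b hb hd => hPn j z b hb hd, fun x hx => by rw [hw0, if_pos hx], hwnn, hoff,
    ?_, ?_, ?_, ?_⟩⟩
  · intro j y hy
    rw [hws, if_pos hy]
    split_ifs with h2
    · rw [hPself j y h2]
      have := (hfac j y h2).1
      calc w j y = N * (w j y * (1 / N)) := by field_simp
        _ ≤ _ := by
          gcongr
          exact hwnn j y
    · apply le_of_eq; field_simp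
  · intro j y hy
    rw [hws, if_pos hy]
    split_ifs with h2
    · rw [hPself j y h2]
      have := (hfac j y h2).2
      have h3 := hwnn j y
      nlinarith
    · apply div_le_self (hwnn _ _)
      exact_mod_cast (by omega : 1 ≤ N)
  · intro j y hy hne
    have h2 : y ∉ S j := fun h => hne (hPself j y h)
    rw [hws, if_pos hy, if_neg h2]
    field_simp
  · intro j x
    refine ⟨(hCh j x).1.toFinset, fun y => by rw [Set.Finite.mem_toFinset]; rfl, ?_⟩
    by_cases hx : x ∈ S j
    · have hxm : x ∈ (hCh j x).1.toFinset := by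
        rw [Set.Finite.mem_toFinset]; exact ⟨hnest j hx, hPself j x hx⟩
      rw [← Finset.add_sum_erase _ _ hxm]
      have e1 : ∑ y ∈ (hCh j x).1.toFinset.erase x, w (j + 1) y =
          ∑ y ∈ (hCh j x).1.toFinset.erase x, w j x / N := by
        refine Finset.sum_congr rfl fun y hy => ?_
        rw [Finset.mem_erase, Set.Finite.mem_toFinset] at hy
        obtain ⟨hyx, hy1, hy2⟩ := hy
        have h2 : y ∉ S j := fun h => hyx (by rw [← hy2, hPself j y h])
        rw [hws, if_pos hy1, if_neg h2, hy2]
      rw [e1, Finset.sum_const, Finset.card_erase_of_mem hxm, nsmul_eq_mul,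
        ← Set.ncard_eq_toFinset_card _ (hCh j x).1, hws, if_pos (hnest j hx), if_pos hx]
      have : 1 ≤ (Ch j x).ncard := by
        rw [Nat.one_le_iff_ne_zero, ← Nat.pos_iff_ne_zero, Set.ncard_pos (hCh j x).1]
        exact ⟨x, hnest j hx, hPself j x hx⟩
      rw [Nat.cast_sub this]
      push_cast
      field_simp
      ring
    · rw [hoff j x hx]
      refine Finset.sum_eq_zero fun y hy => ?_
      rw [Set.Finite.mem_toFinset] at hy
      exact absurd (hy.2 ▸ hPm j y) hx

namespace Tree

variable {Z : Type*} [MetricSpace Z] {ρ : ℝ} {N : ℕ} {L : ℝ}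

lemma compare (t : Tree Z ρ N L) (hρ : 0 < ρ) (hρ1 : ρ ≤ 1 / 20) (hN : 2 ≤ N) (hL : 0 < L) (j : ℕ) :
    ∀ x ∈ t.S j, ∀ y ∈ t.S j, dist x y ≤ 8 * (ρ ^ j * L) → t.w j x ≤ N * t.w j y := by
  have hN0 : (0:ℝ) < N := by positivity
  have hN1 : (1:ℝ) ≤ N := by exact_mod_cast (by omega : 1 ≤ N)
  induction j with
  | zero =>
    intro x hx y hy _
    rw [t.w_zero x hx, t.w_zero y hy]; linarith
  | succ j ih =>
    intro x hx y hy hd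
    have hε : 0 < ρ ^ j * L := by positivity
    have hd' : dist x y ≤ 8 / 20 * (ρ ^ j * L) := by
      calc dist x y ≤ 8 * (ρ ^ (j + 1) * L) := hd
        _ = 8 * ρ * (ρ ^ j * L) := by ring
        _ ≤ _ := by gcongr; linarith
    by_cases hP : t.P j x = t.P j y
    · calc t.w (j + 1) x ≤ t.w j (t.P j x) := t.w_upper j x hx
        _ = t.w j (t.P j y) := by rw [hP]
        _ ≤ _ := t.w_lower j y hy
    · have hPd : dist (t.P j x) (t.P j y) ≤ 8 * (ρ ^ j * L) := by
        have h1 := t.P_dist j x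
        have h2 := t.P_dist j y
        have h3 := dist_triangle4 (t.P j x) x y (t.P j y)
        rw [dist_comm (t.P j x) x] at h3
        linarith
      have h1 := ih _ (t.P_mem j x) _ (t.P_mem j y) hPd
      have hnc : t.P j x ≠ x := by
        intro he
        apply hP
        rw [he]
        symm
        apply t.P_near j y x (he ▸ t.P_mem j x)
        rw [dist_comm]; linarith
      have h2 := t.w_nc j x hx hnc
      have h3 := t.w_lower j y hy
      have : N * t.w (j + 1) x ≤ N * (N * t.w (j + 1) y) := by
        rw [h2]; exact h1.trans (by gcongr)
      exact le_of_mul_le_mul_left this hN0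

/-- Summation functional of level `j`. -/
noncomputable def Phi (t : Tree Z ρ N L) (j : ℕ) (g : Z → ℝ≥0∞) : ℝ≥0∞ :=
  ∑' z, ENNReal.ofReal (t.w j z) * g z

open Classical in
lemma Phi_succ (t : Tree Z ρ N L) (j : ℕ) (g : Z → ℝ≥0∞) :
    t.Phi (j + 1) (fun z => g (t.P j z)) = t.Phi j g := by
  unfold Phi
  have h1 : ∀ y, ENNReal.ofReal (t.w (j + 1) y) * g (t.P j y) =
      ∑' x, (if x = t.P j y then ENNReal.ofReal (t.w (j + 1) y) * g x else 0) := by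
    intro y
    rw [tsum_ite_eq]
  simp_rw [h1]
  rw [ENNReal.tsum_comm]
  refine tsum_congr fun x => ?_
  obtain ⟨F, hF, hsum⟩ := t.w_sum j x
  rw [tsum_eq_sum (s := F)]
  · rw [← hsum, ENNReal.ofReal_sum_of_nonneg (fun i _ => t.w_nonneg _ _), Finset.sum_mul]
    refine Finset.sum_congr rfl fun y hy => ?_
    rw [if_pos ((hF y).mp hy).2.symm]
  · intro y hy
    by_cases hx : x = t.P j y
    · have : y ∉ t.S (j + 1) := fun h => hy ((hF y).mpr ⟨h, hx.symm⟩)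
      rw [if_pos hx, t.w_off _ _ this]; simp
    · rw [if_neg hx]

/-- The ancestor at level `l` of a point at level `l + q`. -/
def anc (t : Tree Z ρ N L) (l : ℕ) : ℕ → Z → Z
  | 0 => id
  | q + 1 => fun z => t.anc l q (t.P (l + q) z)

lemma Phi_anc (t : Tree Z ρ N L) (l q : ℕ) (g : Z → ℝ≥0∞) :
    t.Phi (l + q) (fun z => g (t.anc l q z)) = t.Phi l g := by
  induction q with
  | zero => rfl
  | succ q ih => exact (t.Phi_succ (l + q) (fun z => g (t.anc l q z))).trans ih

lemma anc_dist (t : Tree Z ρ N L) (hρ : 0 < ρ) (hρ1 : ρ ≤ 1 / 20) (hL : 0 < L) (l q : ℕ) (z : Z) :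
    dist z (t.anc l q z) ≤ 2 * (ρ ^ l - ρ ^ (l + q)) * L := by
  induction q generalizing z with
  | zero => simp [anc]
  | succ q ih =>
    have h1 := ih (t.P (l + q) z)
    have h2 := t.P_dist (l + q) z
    have h3 := dist_triangle z (t.P (l + q) z) (t.anc l q (t.P (l + q) z))
    show dist z (t.anc l q (t.P (l + q) z)) ≤ _
    have h4 : ρ ^ (l + (q + 1)) * L = ρ * (ρ ^ (l + q) * L) := by
      rw [← add_assoc, pow_succ]; ring
    have h5 : 0 < ρ ^ (l + q) * L := by positivity
    nlinarith

lemma anc_mem (t : Tree Z ρ N L) (l q : ℕ) (z : Z) (hz : z ∈ t.S (l + q)) :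
    t.anc l q z ∈ t.S l := by
  induction q generalizing z with
  | zero => exact hz
  | succ q ih => exact ih _ (t.P_mem _ _)

lemma anc_w (t : Tree Z ρ N L) (l q : ℕ) (z : Z) (hz : z ∈ t.S (l + q)) :
    t.w l (t.anc l q z) ≤ N ^ q * t.w (l + q) z := by
  induction q generalizing z with
  | zero => simp [anc]
  | succ q ih =>
    have h1 := ih (t.P (l + q) z) (t.P_mem _ _)
    have h2 := t.w_lower (l + q) z hz
    calc t.w l (t.anc l (q + 1) z) ≤ N ^ q * t.w (l + q) (t.P (l + q) z) := h1
      _ ≤ N ^ q * (N * t.w (l + q + 1) z) := by gcongr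
      _ = _ := by rw [pow_succ]; ring_nf

/-- The discrete measure of level `m`. -/
noncomputable def nu (t : Tree Z ρ N L) [MeasurableSpace Z] (m : ℕ) : Measure Z :=
  Measure.sum (fun z => ENNReal.ofReal (t.w m z) • Measure.dirac z)

lemma nu_apply (t : Tree Z ρ N L) [MeasurableSpace Z] (m : ℕ) {B : Set Z} (hB : MeasurableSet B) :
    t.nu m B = t.Phi m (B.indicator 1) := by
  rw [nu, Measure.sum_apply _ hB, Phi]
  refine tsum_congr fun z => ?_
  rw [Measure.smul_apply, Measure.dirac_apply' z hB, smul_eq_mul]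

lemma Phi_mono (t : Tree Z ρ N L) (m : ℕ) {g h : Z → ℝ≥0∞} (hgh : ∀ z ∈ t.S m, g z ≤ h z) :
    t.Phi m g ≤ t.Phi m h := by
  refine ENNReal.tsum_le_tsum fun z => ?_
  by_cases hz : z ∈ t.S m
  · gcongr; exact hgh z hz
  · rw [t.w_off m z hz]; simp

open Classical in
lemma Phi_finset (t : Tree Z ρ N L) (m : ℕ) (F : Finset Z) :
    t.Phi m ((F : Set Z).indicator 1) = ∑ z ∈ F, ENNReal.ofReal (t.w m z) := by
  rw [Phi, tsum_eq_sum (s := F)]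
  · refine Finset.sum_congr rfl fun z hz => ?_
    rw [Set.indicator_of_mem (by exact_mod_cast hz)]; simp
  · intro z hz
    rw [Set.indicator_of_notMem (by exact_mod_cast hz)]; simp

variable [MeasurableSpace Z] [BorelSpace Z]

lemma nu_lower (t : Tree Z ρ N L) (hρ : 0 < ρ) (hρ1 : ρ ≤ 1 / 20) (hL : 0 < L) {k m : ℕ}
    (hkm : k ≤ m) {y y' : Z} {r : ℝ}
    (hr : dist y y' + 2 * (ρ ^ k * L) < r) :
    ENNReal.ofReal (t.w k y') ≤ t.nu m (Metric.ball y r) := by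
  obtain ⟨q, rfl⟩ := Nat.exists_eq_add_of_le hkm
  rw [t.nu_apply _ Metric.isOpen_ball.measurableSet]
  have h1 := t.Phi_finset k {y'}
  rw [Finset.sum_singleton] at h1
  rw [← h1, ← t.Phi_anc k q]
  apply t.Phi_mono
  intro z hz
  by_cases he : t.anc k q z = y'
  · have : z ∈ Metric.ball y r := by
      rw [Metric.mem_ball]
      have h2 := t.anc_dist hρ hρ1 hL k q z
      rw [he] at h2
      have h3 := dist_triangle_right z y y'
      have h4 : 0 < ρ ^ (k + q) * L := by positivity
      nlinarith
    rw [Set.indicator_of_mem this, Set.indicator_of_mem (by simpa using he)]; rfl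
  · rw [Set.indicator_of_notMem (by simpa using he)]; exact zero_le

lemma nu_upper (t : Tree Z ρ N L) {T : ℝ≥0∞} (hρ : 0 < ρ) (hρ1 : ρ ≤ 1 / 20) (hL : 0 < L)
    (hc : Count Z ρ N T) (hLT : ENNReal.ofReal (L / ρ) ≤ T) {l m : ℕ} (hlm : l ≤ m) {x : Z} {R : ℝ}
    (hR : R ≤ ρ ^ l * L) {W0 : ℝ}
    (hW0 : ∀ x' ∈ t.S l, dist x' x < 3 * (ρ ^ l * L) → t.w l x' ≤ W0) :
    t.nu m (Metric.ball x R) ≤ ENNReal.ofReal (N * W0) := by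
  obtain ⟨q, rfl⟩ := Nat.exists_eq_add_of_le hlm
  have hε : 0 < ρ ^ l * L := by positivity
  obtain ⟨hfin, hcard⟩ := finite_of_card_le (S := {x' | x' ∈ t.S l ∧ dist x' x < 3 * (ρ ^ l * L)})
    (N := N) (by
      intro A hA
      apply hc x (ρ ^ l * L / ρ) (by positivity) (adm_mono ?_ hLT) A
      · intro a ha
        have := (hA a ha).2
        have h2 : 3 * (ρ ^ l * L) ≤ ρ ^ l * L / ρ := by
          rw [le_div_iff₀ hρ]; nlinarith
        linarith
      · intro a ha b hb hab
        have := t.sep l a (hA a ha).1 b (hA b hb).1 hab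
        rwa [mul_div_cancel₀ _ hρ.ne']
      · have : ρ ^ l ≤ 1 := pow_le_one₀ hρ.le (by linarith)
        gcongr
        nlinarith)
  rw [t.nu_apply _ Metric.isOpen_ball.measurableSet]
  calc t.Phi (l + q) ((Metric.ball x R).indicator 1)
      ≤ t.Phi (l + q) (fun z => ((hfin.toFinset : Finset Z) : Set Z).indicator 1 (t.anc l q z)) := by
        apply t.Phi_mono
        intro z hz
        by_cases hzb : z ∈ Metric.ball x R
        · rw [Set.indicator_of_mem hzb, Set.indicator_of_mem]
          · rfl
          · rw [Set.Finite.coe_toFinset]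
            refine ⟨t.anc_mem l q z hz, ?_⟩
            have h2 := t.anc_dist hρ hρ1 hL l q z
            have h3 := dist_triangle_left (t.anc l q z) x z
            have h4 : 0 < ρ ^ (l + q) * L := by positivity
            rw [Metric.mem_ball] at hzb
            nlinarith
        · rw [Set.indicator_of_notMem hzb]; exact zero_le
    _ = ∑ z ∈ hfin.toFinset, ENNReal.ofReal (t.w l z) := by rw [t.Phi_anc, Phi_finset]
    _ ≤ ∑ z ∈ hfin.toFinset, ENNReal.ofReal W0 := by
        refine Finset.sum_le_sum fun z hz => ENNReal.ofReal_le_ofReal ?_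
        rw [Set.Finite.mem_toFinset] at hz
        exact hW0 z hz.1 hz.2
    _ ≤ ENNReal.ofReal (N * W0) := by
        rw [Finset.sum_const, nsmul_eq_mul, ENNReal.ofReal_mul (by positivity),
          ENNReal.ofReal_natCast, ← Set.ncard_eq_toFinset_card _ hfin]
        gcongr

end Tree

/-- The homogeneous discrete measures. -/
lemma exists_discrete {Z : Type*} [MetricSpace Z] [MeasurableSpace Z] [BorelSpace Z]
    {ρ : ℝ} {N : ℕ} {T : ℝ≥0∞} (hρ : 0 < ρ)
    (hρ1 : ρ ≤ 1 / 20) (hN : 2 ≤ N) (hc : Count Z ρ N T) {s : ℝ} (hs0 : 0 < s)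
    (hs : (ρ⁻¹) ^ s = N) {L : ℝ} (hL : 0 < L)
    (hLT : ENNReal.ofReal (L / ρ) ≤ T) (m : ℕ) (hm : 1 ≤ m) :
    ∃ ν : Measure Z, (∀ x, ENNReal.ofReal (N : ℝ)⁻¹ ≤ ν (Metric.ball x L) ∧
        ν (Metric.ball x L) ≤ ENNReal.ofReal N) ∧
      ∀ x y r R, 4 * ρ ^ m * L < r → r ≤ R → R ≤ L → dist x y ≤ R →
        ν (Metric.ball x R) ≤ ENNReal.ofReal (N ^ 2 * (4 * ρ⁻¹ ^ 2) ^ s * (R / r) ^ s) *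
          ν (Metric.ball y r) := by
  obtain ⟨t⟩ := exists_tree hρ hρ1 hN hc hL hLT
  have hN0 : (0:ℝ) < N := by positivity
  have hN1 : (1:ℝ) ≤ N := by exact_mod_cast (by omega : 1 ≤ N)
  refine ⟨t.nu m, fun x => ⟨?_, ?_⟩, ?_⟩
  · obtain ⟨a, ha, had⟩ := t.dense 1 x
    refine le_trans (ENNReal.ofReal_le_ofReal ?_) (t.nu_lower hρ hρ1 hL (k := 1) hm (y' := a) ?_)
    · have := t.w_lower 0 a ha
      rw [t.w_zero _ (t.P_mem 0 a)] at this
      rw [inv_le_iff_one_le_mul₀ hN0]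
      linarith
    · rw [pow_one] at had ⊢
      nlinarith
  · have := t.nu_upper hρ hρ1 hL hc hLT (l := 0) (m := m) (Nat.zero_le _) (x := x) (R := L) (W0 := 1)
      (by simp) (fun x' hx' _ => (t.w_zero x' hx').le)
    rwa [mul_one] at this
  · intro x y r R hr hrR hRL hxy
    have hr0 : 0 < r := lt_of_le_of_lt (by positivity) hr
    have hR0 : 0 < R := by linarith
    have hρlt : ρ < 1 := by linarith
    obtain ⟨l, hl1, hl2⟩ := exists_nat_pow_near_of_lt_one (x := R / L) (y := ρ) (by positivity)
      (by rw [div_le_one hL]; exact hRL) hρ hρlt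
    obtain ⟨k', hk1, hk2⟩ := exists_nat_pow_near_of_lt_one (x := r / (4 * L)) (y := ρ) (by positivity)
      (by rw [div_le_one (by positivity)]; linarith) hρ hρlt
    rw [lt_div_iff₀ hL] at hl1
    rw [div_le_iff₀ hL] at hl2
    rw [lt_div_iff₀ (by positivity)] at hk1
    rw [div_le_iff₀ (by positivity)] at hk2
    have hkm : k' + 1 ≤ m := by
      by_contra hcon
      have h1 : m ≤ k' := by omega
      have : ρ ^ k' ≤ ρ ^ m := pow_le_pow_of_le_one hρ.le hρlt.le h1
      have : ρ ^ k' * (4 * L) ≤ ρ ^ m * (4 * L) := by gcongr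
      linarith
    have hlk : l ≤ k' + 1 := by
      by_contra hcon
      have h1 : k' + 1 ≤ l := by omega
      have : ρ ^ l ≤ ρ ^ (k' + 1) := pow_le_pow_of_le_one hρ.le hρlt.le h1
      have h2 : ρ ^ l * L ≤ ρ ^ (k' + 1) * L := by gcongr
      have h3 : 0 < ρ ^ (k' + 1) * L := by positivity
      linarith
    obtain ⟨q, hq⟩ := Nat.exists_eq_add_of_le hlk
    obtain ⟨y', hy', hyd⟩ := t.dense (k' + 1) y
    have hlow := t.nu_lower hρ hρ1 hL hkm (y := y) (y' := y') (r := r) (by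
      have h3 : 0 < ρ ^ (k' + 1) * L := by positivity
      linarith)
    rw [hq] at hy' hyd hlow
    have hkl : ρ ^ (l + q) * L ≤ ρ ^ l * L := by
      have : ρ ^ (l + q) ≤ ρ ^ l := pow_le_pow_of_le_one hρ.le hρlt.le (Nat.le_add_right _ _)
      gcongr
    have hup := t.nu_upper hρ hρ1 hL hc hLT (l := l) (m := m) (by omega) (x := x) (R := R)
      (W0 := N * (N ^ q * t.w (l + q) y')) hl2 (by
        intro x' hx' hd
        have h1 := t.anc_dist hρ hρ1 hL l q y'
        have h2 := t.anc_mem l q y' hy'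
        have h3 := t.compare hρ hρ1 hN hL l x' hx' _ h2 (by
          have e1 := dist_triangle4 x' x y y'
          have e2 := dist_triangle x' y' (t.anc l q y')
          have h4 : 0 < ρ ^ (l + q) * L := by positivity
          nlinarith)
        refine h3.trans ?_
        gcongr
        exact t.anc_w l q y' hy')
    have hNq : (N:ℝ) ^ q ≤ (4 * ρ⁻¹ ^ 2) ^ s * (R / r) ^ s := by
      have e1 : (N:ℝ) ^ q = ((ρ⁻¹) ^ q) ^ s := by
        rw [← hs, ← Real.rpow_natCast, ← Real.rpow_mul (by positivity), ← Real.rpow_natCast,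
          ← Real.rpow_mul (by positivity), mul_comm]
      rw [e1, ← Real.mul_rpow (by positivity) (by positivity)]
      apply Real.rpow_le_rpow (by positivity) _ hs0.le
      have e2 : ρ ^ (l + 1) * L * r ≤ R * (ρ ^ k' * (4 * L)) := by gcongr
      have e3 : ρ ^ k' * ρ = ρ ^ l * ρ ^ q := by rw [← pow_succ, ← pow_add, hq]
      have e4 : ρ ^ l * (ρ ^ 2 * r) ≤ ρ ^ l * (4 * R * ρ ^ q) := by
        have e5 : L * (ρ ^ l * (ρ ^ 2 * r)) ≤ L * (ρ ^ l * (4 * R * ρ ^ q)) := by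
          calc L * (ρ ^ l * (ρ ^ 2 * r)) = ρ * (ρ ^ (l + 1) * L * r) := by ring
            _ ≤ ρ * (R * (ρ ^ k' * (4 * L))) := by gcongr
            _ = L * (4 * R * (ρ ^ k' * ρ)) := by ring
            _ = _ := by rw [e3]; ring
        exact le_of_mul_le_mul_left e5 hL
      have e6 := le_of_mul_le_mul_left e4 (by positivity)
      rw [inv_pow, inv_pow]
      have : 4 * (ρ ^ 2)⁻¹ * (R / r) = (4 * R) / (ρ ^ 2 * r) := by field_simp
      rw [this, inv_eq_one_div, div_le_div_iff₀ (by positivity) (by positivity)]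
      linarith
    calc t.nu m (Metric.ball x R) ≤ ENNReal.ofReal (N * (N * (N ^ q * t.w (l + q) y'))) := hup
      _ = ENNReal.ofReal (N ^ 2 * N ^ q) * ENNReal.ofReal (t.w (l + q) y') := by
        rw [← ENNReal.ofReal_mul (by positivity)]; congr 1; ring
      _ ≤ ENNReal.ofReal (N ^ 2 * (4 * ρ⁻¹ ^ 2) ^ s * (R / r) ^ s) * t.nu m (Metric.ball y r) := by
        have hlast : (N:ℝ) ^ 2 * N ^ q ≤ N ^ 2 * (4 * ρ⁻¹ ^ 2) ^ s * (R / r) ^ s := by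
          rw [mul_assoc]
          gcongr
        exact mul_le_mul' (ENNReal.ofReal_le_ofReal hlast) hlow

end PorousQS
end

section
open scoped NNReal ENNReal
open MeasureTheory
namespace PorousQS

lemma cover_ball {Z : Type*} [MetricSpace Z] {ρ : ℝ} {N : ℕ} {T : ℝ≥0∞} (hρ : 0 < ρ)
    (hρ1 : ρ ≤ 1 / 20) (hc : Count Z ρ N T) (k : ℕ) : ∀ (x : Z) (R : ℝ), 0 < R →
    ENNReal.ofReal R ≤ T → ∃ t : Set Z, t.Finite ∧
      Metric.ball x R ⊆ ⋃ y ∈ t, Metric.ball y (ρ ^ k * R) := by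
  induction k with
  | zero =>
    intro x R hR hT
    exact ⟨{x}, Set.finite_singleton x, by simp⟩
  | succ k ih =>
    intro x R hR hT
    have hρR : 0 < ρ * R := by positivity
    obtain ⟨S, hS⟩ := exists_max_sep (Z := Metric.ball x R) ∅ (ρ * R) hρR
    obtain ⟨-, hsep, hd⟩ := hS (fun a ha => absurd ha (Set.notMem_empty a))
    have hfin : (Subtype.val '' S).Finite := by
      refine (finite_of_card_le (N := N) (fun A hA => ?_)).1
      apply hc x R hR hT A
      · intro a ha
        obtain ⟨a', -, rfl⟩ := hA a ha
        exact a'.2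
      · intro a ha b hb hab
        obtain ⟨a', ha', rfl⟩ := hA a ha
        obtain ⟨b', hb', rfl⟩ := hA b hb
        exact hsep a' ha' b' hb' (fun h => hab (by rw [h]))
    have hadm : ENNReal.ofReal (ρ * R) ≤ T := adm_mono (by nlinarith) hT
    choose t ht htc using fun y : Z => ih y (ρ * R) hρR hadm
    refine ⟨⋃ y ∈ Subtype.val '' S, t y, hfin.biUnion (fun y _ => ht y), ?_⟩
    intro z hz
    obtain ⟨a, ha, hda⟩ := hd ⟨z, hz⟩
    have h1 : z ∈ Metric.ball (a : Z) (ρ * R) := hda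
    have h2 := htc a h1
    simp only [Set.mem_iUnion] at h2 ⊢
    obtain ⟨y, hy, hzy⟩ := h2
    refine ⟨y, ⟨a, ⟨a, ha, rfl⟩, hy⟩, ?_⟩
    rw [pow_succ, mul_assoc]
    exact hzy

lemma compact_closedBall {Z : Type*} [MetricSpace Z] [CompleteSpace Z] {ρ : ℝ} {N : ℕ} {T : ℝ≥0∞}
    (hρ : 0 < ρ) (hρ1 : ρ ≤ 1 / 20) (hc : Count Z ρ N T) (x : Z) {r R : ℝ} (hr : r < R)
    (hR : 0 < R) (hT : ENNReal.ofReal R ≤ T) : IsCompact (Metric.closedBall x r) := by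
  have htb : TotallyBounded (Metric.ball x R) := by
    rw [Metric.totallyBounded_iff]
    intro ε hε
    obtain ⟨k, hk⟩ := exists_pow_lt_of_lt_one (show 0 < ε / R by positivity)
      (show ρ < 1 by linarith)
    obtain ⟨t, ht, hcov⟩ := cover_ball hρ hρ1 hc k x R hR hT
    refine ⟨t, ht, hcov.trans ?_⟩
    refine Set.iUnion₂_mono (fun y _ => Metric.ball_subset_ball ?_)
    rw [lt_div_iff₀ hR] at hk
    exact hk.le
  exact isCompact_iff_totallyBounded_isComplete.mpr
    ⟨htb.subset (Metric.closedBall_subset_ball hr), Metric.isClosed_closedBall.isComplete⟩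

open CompactlySupported in
lemma exists_bump {Z : Type*} [MetricSpace Z] (x : Z) {r : ℝ} (hr : 0 < r)
    (hc : IsCompact (Metric.closedBall x (2 * r))) : ∃ f : C_c(Z, ℝ),
      (∀ z, 0 ≤ f z ∧ f z ≤ 1) ∧ (∀ z ∈ Metric.closedBall x r, f z = 1) ∧
      (∀ z, z ∉ Metric.ball x (2 * r) → f z = 0) ∧ tsupport f ⊆ Metric.closedBall x (2 * r) := by
  let g : Z → ℝ := fun z => max 0 (min 1 (2 - dist z x / r))
  have hg : Continuous g := by fun_prop
  have h0 : ∀ z, z ∉ Metric.ball x (2 * r) → g z = 0 := by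
    intro z hz
    have h1 : 2 * r ≤ dist z x := by simpa using hz
    have h2 : 2 ≤ dist z x / r := by rw [le_div_iff₀ hr]; exact h1
    have h3 : min 1 (2 - dist z x / r) ≤ 0 := (min_le_right _ _).trans (by linarith)
    exact max_eq_left h3
  have hts : tsupport g ⊆ Metric.closedBall x (2 * r) := by
    apply closure_minimal _ Metric.isClosed_closedBall
    intro z hz
    by_contra hcon
    exact hz (h0 z (fun h => hcon (Metric.ball_subset_closedBall h)))
  refine ⟨⟨⟨g, hg⟩, hc.of_isClosed_subset (isClosed_tsupport g) hts⟩, fun z => ⟨?_, ?_⟩, ?_, h0, hts⟩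
  · exact le_max_left _ _
  · exact max_le zero_le_one (min_le_left _ _)
  · intro z hz
    have h1 : dist z x ≤ r := hz
    have h2 : dist z x / r ≤ 1 := by rw [div_le_one hr]; exact h1
    change max 0 (min 1 (2 - dist z x / r)) = 1
    rw [min_eq_left (by linarith), max_eq_right zero_le_one]

open CompactlySupported in
lemma bump_integral {Z : Type*} [MetricSpace Z] [MeasurableSpace Z] [BorelSpace Z]
    (ν : Measure Z) [IsFiniteMeasureOnCompacts ν] {x : Z} {r : ℝ} {f : C_c(Z, ℝ)}
    (h01 : ∀ z, 0 ≤ f z ∧ f z ≤ 1) (h1 : ∀ z ∈ Metric.closedBall x r, f z = 1)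
    (h0 : ∀ z, z ∉ Metric.ball x (2 * r) → f z = 0) :
    ν (Metric.ball x r) ≤ ENNReal.ofReal (∫ z, f z ∂ν) ∧
      ENNReal.ofReal (∫ z, f z ∂ν) ≤ ν (Metric.ball x (2 * r)) := by
  have hIntg : Integrable (fun z => f z) ν :=
    Continuous.integrable_of_hasCompactSupport f.1.2 f.2
  rw [ofReal_integral_eq_lintegral_ofReal hIntg (Filter.Eventually.of_forall fun z => (h01 z).1)]
  constructor
  · rw [← lintegral_indicator_one Metric.isOpen_ball.measurableSet]
    apply lintegral_mono
    intro z
    by_cases hz : z ∈ Metric.ball x r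
    · simp [Set.indicator_of_mem hz, h1 z (Metric.ball_subset_closedBall hz)]
    · simp [Set.indicator_of_notMem hz]
  · rw [← lintegral_indicator_one Metric.isOpen_ball.measurableSet]
    apply lintegral_mono
    intro z
    by_cases hz : z ∈ Metric.ball x (2 * r)
    · simp [Set.indicator_of_mem hz, (h01 z).2]
    · simp [Set.indicator_of_notMem hz, h0 z hz]

open CompactlySupported Filter in
lemma exists_limit_functional {Z : Type*} [MetricSpace Z] [MeasurableSpace Z] [BorelSpace Z]
    (ν : ℕ → Measure Z) [∀ n, IsFiniteMeasureOnCompacts (ν n)]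
    (hb : ∀ K : Set Z, IsCompact K → ∃ M : ℝ≥0, ∀ᶠ n in atTop, ν n K ≤ M) :
    ∃ Λ : C_c(Z, ℝ) →ₚ[ℝ] ℝ, ∀ f : C_c(Z, ℝ),
      Tendsto (fun n => ∫ z, f z ∂(ν n)) (hyperfilter ℕ : Filter ℕ) (nhds (Λ f)) := by
  have hIntg : ∀ n (f : C_c(Z, ℝ)), Integrable (fun z => f z) (ν n) := fun n f =>
    Continuous.integrable_of_hasCompactSupport f.1.2 f.2
  have hlim : ∀ f : C_c(Z, ℝ), ∃ l : ℝ,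
      Tendsto (fun n => ∫ z, f z ∂(ν n)) (hyperfilter ℕ : Filter ℕ) (nhds l) := by
    intro f
    obtain ⟨M, hM⟩ := hb (tsupport f) f.2
    obtain ⟨B, hB0, hB⟩ : ∃ B : ℝ, 0 ≤ B ∧ ∀ z, ‖f z‖ ≤ B := by
      obtain ⟨B, hB⟩ := f.1.2.bounded_above_of_compact_support f.2
      exact ⟨max B 0, le_max_right _ _, fun z => (hB z).trans (le_max_left _ _)⟩
    have hev : ∀ᶠ n in (hyperfilter ℕ : Filter ℕ),
        (∫ z, f z ∂(ν n)) ∈ Metric.closedBall (0:ℝ) (B * M) := by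
      filter_upwards [Nat.hyperfilter_le_atTop hM] with n hn
      have hfin : ν n (tsupport f) < ⊤ := lt_of_le_of_lt hn ENNReal.coe_lt_top
      have h1 : ∫ z, f z ∂(ν n) = ∫ z in tsupport f, f z ∂(ν n) :=
        (setIntegral_eq_integral_of_forall_compl_eq_zero
          (fun z hz => image_eq_zero_of_notMem_tsupport hz)).symm
      rw [mem_closedBall_zero_iff, h1]
      have h2 := norm_setIntegral_le_of_norm_le_const hfin (fun z _ => hB z)
      refine h2.trans ?_
      gcongr
      exact ENNReal.toReal_le_of_le_ofReal M.2 (by simpa using hn)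
    obtain ⟨l, -, hl⟩ := (isCompact_closedBall (0:ℝ) (B * M)).ultrafilter_le_nhds
      ((hyperfilter ℕ).map (fun n => ∫ z, f z ∂(ν n))) (le_principal_iff.mpr hev)
    exact ⟨l, hl⟩
  choose Λ hΛ using hlim
  let L : C_c(Z, ℝ) →ₗ[ℝ] ℝ :=
    { toFun := Λ
      map_add' := by
        intro f g
        refine tendsto_nhds_unique (hΛ (f + g)) ?_
        refine ((hΛ f).add (hΛ g)).congr (fun n => ?_)
        rw [← integral_add (hIntg n f) (hIntg n g)]
        rfl
      map_smul' := by
        intro c f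
        refine tendsto_nhds_unique (hΛ (c • f)) ?_
        refine ((hΛ f).const_mul c).congr (fun n => ?_)
        rw [← integral_const_mul]
        rfl }
  refine ⟨PositiveLinearMap.mk₀ L (fun f hf => ?_), fun f => hΛ f⟩
  refine ge_of_tendsto' (hΛ f) (fun n => ?_)
  exact integral_nonneg (fun z => hf z)

open CompactlySupported Filter in
lemma limit_measure {Z : Type*} [MetricSpace Z] [MeasurableSpace Z] [BorelSpace Z]
    [LocallyCompactSpace Z]
    (ν : ℕ → Measure Z) [∀ n, IsFiniteMeasureOnCompacts (ν n)]
    (hb : ∀ K : Set Z, IsCompact K → ∃ M : ℝ≥0, ∀ᶠ n in atTop, ν n K ≤ M) :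
    ∃ μ : Measure Z,
      (∀ (x : Z) (r : ℝ) (c : ℝ≥0∞), 0 < r → IsCompact (Metric.closedBall x (2 * r)) →
        (∀ᶠ n in atTop, ν n (Metric.ball x (2 * r)) ≤ c) → μ (Metric.ball x r) ≤ c) ∧
      (∀ (x : Z) (r : ℝ) (c : ℝ≥0∞), 0 < r → IsCompact (Metric.closedBall x (2 * r)) →
        (∀ᶠ n in atTop, c ≤ ν n (Metric.ball x r)) → c ≤ μ (Metric.ball x (3 * r))) ∧
      (∀ (x y : Z) (R r : ℝ) (K : ℝ), 0 < R → 0 < r → 0 ≤ K →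
        IsCompact (Metric.closedBall x (2 * R)) → IsCompact (Metric.closedBall y (2 * r)) →
        (∀ᶠ n in atTop, ν n (Metric.ball x (2 * R)) ≤ ENNReal.ofReal K * ν n (Metric.ball y r)) →
        μ (Metric.ball x R) ≤ ENNReal.ofReal K * μ (Metric.ball y (3 * r))) := by
  obtain ⟨Λ, hΛ⟩ := exists_limit_functional ν hb
  have hup : ∀ (x : Z) (r : ℝ) (f : C_c(Z, ℝ)), 0 < r →
      IsCompact (Metric.closedBall x (2 * r)) → (∀ z, 0 ≤ f z ∧ f z ≤ 1) →
      (∀ z ∈ Metric.closedBall x r, f z = 1) →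
      RealRMK.rieszMeasure Λ (Metric.ball x r) ≤ ENNReal.ofReal (Λ f) := by
    intro x r f hr hc h01 h1
    refine (measure_mono Metric.ball_subset_closedBall).trans
      (RealRMK.rieszMeasure_le_of_eq_one Λ (fun z => (h01 z).1)
        (hc.of_isClosed_subset Metric.isClosed_closedBall
          (Metric.closedBall_subset_closedBall (by linarith))) h1)
  have hdn : ∀ (x : Z) (r : ℝ) (f : C_c(Z, ℝ)), 0 < r → (∀ z, 0 ≤ f z ∧ f z ≤ 1) →
      tsupport f ⊆ Metric.closedBall x (2 * r) →
      ENNReal.ofReal (Λ f) ≤ RealRMK.rieszMeasure Λ (Metric.ball x (3 * r)) := by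
    intro x r f hr h01 ht
    exact RealRMK.le_rieszMeasure_tsupport_subset Λ h01
      (ht.trans (Metric.closedBall_subset_ball (by linarith)))
  have hT : ∀ f : C_c(Z, ℝ), Tendsto (fun n => ENNReal.ofReal (∫ z, f z ∂(ν n)))
      (hyperfilter ℕ : Filter ℕ) (nhds (ENNReal.ofReal (Λ f))) := fun f =>
    (ENNReal.continuous_ofReal.tendsto _).comp (hΛ f)
  refine ⟨RealRMK.rieszMeasure Λ, ?_, ?_, ?_⟩
  · intro x r c hr hc hev
    obtain ⟨f, h01, h1, h0, ht⟩ := exists_bump x hr hc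
    refine (hup x r f hr hc h01 h1).trans (le_of_tendsto (hT f) ?_)
    filter_upwards [Nat.hyperfilter_le_atTop hev] with n hn
    exact (bump_integral (ν n) h01 h1 h0).2.trans hn
  · intro x r c hr hc hev
    obtain ⟨f, h01, h1, h0, ht⟩ := exists_bump x hr hc
    refine le_trans (ge_of_tendsto (hT f) ?_) (hdn x r f hr h01 ht)
    filter_upwards [Nat.hyperfilter_le_atTop hev] with n hn
    exact hn.trans (bump_integral (ν n) h01 h1 h0).1
  · intro x y R r K hR hr hK hcx hcy hev
    obtain ⟨f, h01, h1, h0, ht⟩ := exists_bump x hR hcx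
    obtain ⟨g, g01, g1, g0, gt⟩ := exists_bump y hr hcy
    refine (hup x R f hR hcx h01 h1).trans ?_
    refine le_trans ?_ (mul_le_mul_right (hdn y r g hr g01 gt) _)
    refine le_of_tendsto_of_tendsto (hT f)
      (ENNReal.Tendsto.const_mul (hT g) (Or.inr ENNReal.ofReal_ne_top)) ?_
    filter_upwards [Nat.hyperfilter_le_atTop hev] with n hn
    calc _ ≤ ν n (Metric.ball x (2 * R)) := (bump_integral (ν n) h01 h1 h0).2
      _ ≤ _ := hn
      _ ≤ _ := mul_le_mul_right (bump_integral (ν n) g01 g1 g0).1 _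

end PorousQS
end

section
open scoped NNReal ENNReal
open MeasureTheory
namespace PorousQS

/-- Doubling at scales bounded by `A`. -/
def Dbl {Z : Type*} [MetricSpace Z] [MeasurableSpace Z] (μ : Measure Z) (C s : ℝ) (A : ℝ≥0∞) :
    Prop :=
  ∀ x y r R, 0 < r → r ≤ R → ENNReal.ofReal R ≤ A → dist x y ≤ R →
    μ (Metric.ball x R) ≤ ENNReal.ofReal (C * (R / r) ^ s) * μ (Metric.ball y r)

lemma locallyCompact_of_balls {Z : Type*} [MetricSpace Z] {A : ℝ≥0∞} (hA : 0 < A)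
    (hcpt : ∀ (x : Z) r, ENNReal.ofReal r ≤ A → IsCompact (Metric.closedBall x r)) :
    LocallyCompactSpace Z := by
  obtain ⟨r, hr, hrA⟩ : ∃ r : ℝ, 0 < r ∧ ENNReal.ofReal r ≤ A := by
    rcases eq_or_ne A ⊤ with rfl | h
    · exact ⟨1, one_pos, le_top⟩
    · exact ⟨A.toReal, ENNReal.toReal_pos hA.ne' h, by rw [ENNReal.ofReal_toReal h]⟩
  have : WeaklyLocallyCompactSpace Z :=
    ⟨fun x => ⟨Metric.closedBall x r, hcpt x r hrA, Metric.closedBall_mem_nhds x hr⟩⟩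
  infer_instance

lemma compact_bound {Z : Type*} [MetricSpace Z] [MeasurableSpace Z]
    {L : ℝ} (hL : 0 < L) {K : Set Z} (hK : IsCompact K) : ∃ k : ℕ, ∀ (ν : Measure Z) (M : ℝ≥0∞),
      (∀ x, ν (Metric.ball x L) ≤ M) → ν K ≤ k * M := by
  obtain ⟨t, -, ht, hcov⟩ := hK.finite_cover_balls hL
  refine ⟨ht.toFinset.card, fun ν M hM => ?_⟩
  calc ν K ≤ ν (⋃ x ∈ t, Metric.ball x L) := measure_mono hcov
    _ = ν (⋃ x ∈ ht.toFinset, Metric.ball x L) := by simp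
    _ ≤ ∑ x ∈ ht.toFinset, ν (Metric.ball x L) := measure_biUnion_finset_le _ _
    _ ≤ ∑ x ∈ ht.toFinset, M := Finset.sum_le_sum (fun x _ => hM x)
    _ = _ := by simp

open Filter in
lemma limit_doubling {Z : Type*} [MetricSpace Z] [MeasurableSpace Z] [BorelSpace Z]
    {A : ℝ≥0∞} (hA : 0 < A)
    (hcpt : ∀ (x : Z) r, ENNReal.ofReal r ≤ A → IsCompact (Metric.closedBall x r))
    (ν : ℕ → Measure Z) (hfin : ∀ n, IsFiniteMeasureOnCompacts (ν n))
    (hb : ∀ K : Set Z, IsCompact K → ∃ M : ℝ≥0, ∀ᶠ n in atTop, ν n K ≤ M)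
    {C s : ℝ} (hC : 0 ≤ C) (hs : 0 < s)
    (hd : ∀ x y r R, 0 < r → r ≤ R → ENNReal.ofReal R ≤ A → dist x y ≤ R →
      ∀ᶠ n in atTop, ν n (Metric.ball x R) ≤
        ENNReal.ofReal (C * (R / r) ^ s) * ν n (Metric.ball y r)) :
    ∃ μ : Measure Z, (∀ B : ℝ≥0∞, 2 * B ≤ A → Dbl μ (C * 6 ^ s) s B) ∧
      (∀ (x : Z) (r : ℝ) (c : ℝ≥0∞), 0 < r → ENNReal.ofReal (2 * r) ≤ A →
        (∀ᶠ n in atTop, ν n (Metric.ball x (2 * r)) ≤ c) → μ (Metric.ball x r) ≤ c) ∧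
      (∀ (x : Z) (r : ℝ) (c : ℝ≥0∞), 0 < r → ENNReal.ofReal (2 * r) ≤ A →
        (∀ᶠ n in atTop, c ≤ ν n (Metric.ball x r)) → c ≤ μ (Metric.ball x (3 * r))) := by
  have := locallyCompact_of_balls hA hcpt
  obtain ⟨μ, hU, hL, hM⟩ := limit_measure ν hb
  refine ⟨μ, ?_, fun x r c hr hrA => hU x r c hr (hcpt _ _ hrA),
    fun x r c hr hrA => hL x r c hr (hcpt _ _ hrA)⟩
  intro B hB x y r R hr hrR hRB hxy
  have hR : 0 < R := hr.trans_le hrR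
  have hRA : ENNReal.ofReal (2 * R) ≤ A := by
    refine le_trans ?_ hB
    rw [ENNReal.ofReal_mul zero_le_two]
    gcongr
    simp
  have h := hM x y R (r / 3) (C * (2 * R / (r / 3)) ^ s) hR (by positivity) (by positivity)
    (hcpt _ _ hRA) (hcpt _ _ (adm_mono (by linarith) hRA))
    (hd x y (r / 3) (2 * R) (by positivity) (by linarith) hRA (by linarith))
  have e1 : 2 * R / (r / 3) = 6 * (R / r) := by field_simp; norm_num
  rw [e1, Real.mul_rpow (by norm_num) (by positivity), ← mul_assoc] at h
  have e2 : 3 * (r / 3) = r := by ring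
  rwa [e2] at h

lemma dbl_pos {Z : Type*} [MetricSpace Z] [MeasurableSpace Z] {μ : Measure Z} {C s : ℝ}
    {A : ℝ≥0∞} (h : Dbl μ C s A) {x y : Z} {r R : ℝ} (hr : 0 < r) (hrR : r ≤ R)
    (hR : ENNReal.ofReal R ≤ A) (hxy : dist x y ≤ R) (hp : 0 < μ (Metric.ball x R)) :
    0 < μ (Metric.ball y r) := by
  have h1 := h x y r R hr hrR hR hxy
  rw [pos_iff_ne_zero]
  intro h0
  rw [h0, mul_zero] at h1
  exact absurd hp (not_lt.mpr h1)

open Filter in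
/-- The good measure, bounded version. -/
lemma exists_measure_bdd {Z : Type*} [MetricSpace Z] [CompleteSpace Z] [MeasurableSpace Z]
    [BorelSpace Z] {ρ : ℝ} {N : ℕ} {T : ℝ≥0∞} (hρ : 0 < ρ)
    (hρ1 : ρ ≤ 1 / 20) (hN : 2 ≤ N) (hc : Count Z ρ N T) {s : ℝ} (hs0 : 0 < s)
    (hs : (ρ⁻¹) ^ s = N) {L : ℝ} (hL : 0 < L)
    (hLT : ENNReal.ofReal (L / ρ) ≤ T) :
    ∃ (μ : Measure Z) (C : ℝ) (a b : ℝ), 0 < C ∧ 0 < a ∧ Dbl μ C s (ENNReal.ofReal (L / 6)) ∧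
      ∀ x, ENNReal.ofReal a ≤ μ (Metric.ball x (L / 6)) ∧
        μ (Metric.ball x (L / 6)) ≤ ENNReal.ofReal b := by
  have hN0 : (0:ℝ) < N := by positivity
  choose ν hν1 hν2 using fun n : ℕ =>
    exists_discrete hρ hρ1 hN hc hs0 hs hL hLT (n + 1) (by omega)
  set C₀ : ℝ := (N:ℝ) ^ 2 * (4 * ρ⁻¹ ^ 2) ^ s with hC₀
  have hC₀p : 0 < C₀ := by positivity
  have hLL : L < L / ρ := by rw [lt_div_iff₀ hρ]; nlinarith
  have hcpt : ∀ (x : Z) r, ENNReal.ofReal r ≤ ENNReal.ofReal L →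
      IsCompact (Metric.closedBall x r) := fun x r hr =>
    compact_closedBall hρ hρ1 hc x (lt_of_le_of_lt ((ENNReal.ofReal_le_ofReal_iff hL.le).mp hr) hLL)
      (by positivity) hLT
  have hb : ∀ K : Set Z, IsCompact K → ∃ M : ℝ≥0, ∀ n, ν n K ≤ M := by
    intro K hK
    obtain ⟨k, hk⟩ := compact_bound hL hK
    refine ⟨k * N, fun n => ?_⟩
    have := hk (ν n) (ENNReal.ofReal N) (fun x => (hν1 n x).2)
    simpa using this
  have hd : ∀ x y r R, 0 < r → r ≤ R → ENNReal.ofReal R ≤ ENNReal.ofReal L → dist x y ≤ R →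
      ∀ᶠ n in atTop, ν n (Metric.ball x R) ≤
        ENNReal.ofReal (C₀ * (R / r) ^ s) * ν n (Metric.ball y r) := by
    intro x y r R hr hrR hRL hxy
    have hlim : Tendsto (fun n : ℕ => 4 * ρ ^ (n + 1) * L) atTop (nhds (4 * 0 * L)) :=
      (((tendsto_pow_atTop_nhds_zero_of_lt_one hρ.le (by linarith)).comp
        (tendsto_add_atTop_nat 1)).const_mul 4).mul_const L
    filter_upwards [hlim.eventually (gt_mem_nhds (by simpa using hr))] with n hn
    exact hν2 n x y r R hn hrR ((ENNReal.ofReal_le_ofReal_iff hL.le).mp hRL) hxy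
  obtain ⟨μ, hD, hU, hLo⟩ := limit_doubling (ENNReal.ofReal_pos.mpr hL) hcpt ν
    (fun n => ⟨fun K hK => by
      obtain ⟨M, hM⟩ := hb K hK
      exact lt_of_le_of_lt (hM n) ENNReal.coe_lt_top⟩)
    (fun K hK => by
      obtain ⟨M, hM⟩ := hb K hK
      exact ⟨M, Eventually.of_forall hM⟩) hC₀p.le hs0 hd
  have hq : 0 < C₀ * (L / (L / 18)) ^ s := by positivity
  refine ⟨μ, C₀ * 6 ^ s, (N:ℝ)⁻¹ / (C₀ * (L / (L / 18)) ^ s), N, by positivity, by positivity,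
    hD _ ?_, fun x => ⟨?_, ?_⟩⟩
  · rw [show (2:ℝ≥0∞) = ENNReal.ofReal 2 by simp, ← ENNReal.ofReal_mul zero_le_two]
    exact ENNReal.ofReal_le_ofReal (by linarith)
  · have := hLo x (L / 18) (ENNReal.ofReal ((N:ℝ)⁻¹ / (C₀ * (L / (L / 18)) ^ s))) (by positivity)
      (ENNReal.ofReal_le_ofReal (by linarith)) (by
        filter_upwards [hd x x (L / 18) L (by positivity) (by linarith) le_rfl
          (by rw [dist_self]; exact hL.le)] with n hn
        rw [ENNReal.ofReal_div_of_pos hq]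
        apply ENNReal.div_le_of_le_mul
        rw [mul_comm]
        exact ((hν1 n x).1).trans hn)
    rwa [show 3 * (L / 18) = L / 6 by ring] at this
  · refine hU x (L / 6) _ (by positivity) (ENNReal.ofReal_le_ofReal (by linarith))
      (Eventually.of_forall fun n => ?_)
    exact (measure_mono (Metric.ball_subset_ball (by linarith))).trans (hν1 n x).2

open Filter in
/-- The good measure, unbounded version. -/
lemma exists_measure_unbdd {Z : Type*} [MetricSpace Z] [CompleteSpace Z] [Nonempty Z]
    [MeasurableSpace Z]
    [BorelSpace Z] {ρ : ℝ} {N : ℕ} (hρ : 0 < ρ)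
    (hρ1 : ρ ≤ 1 / 20) (hN : 2 ≤ N) (hc : Count Z ρ N ⊤) {s : ℝ} (hs0 : 0 < s)
    (hs : (ρ⁻¹) ^ s = N) :
    ∃ (μ : Measure Z) (C : ℝ), 0 < C ∧ Dbl μ C s ⊤ ∧
      ∀ x r, 0 < r → 0 < μ (Metric.ball x r) ∧ μ (Metric.ball x r) < ⊤ := by
  obtain ⟨z0⟩ := ‹Nonempty Z›
  have hN0 : (0:ℝ) < N := by positivity
  have hLp : ∀ n : ℕ, 0 < (ρ⁻¹) ^ (n + 1) := fun n => by positivity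
  choose ν hν1 hν2 using fun n : ℕ =>
    exists_discrete hρ hρ1 hN hc hs0 hs (hLp n) le_top (2 * (n + 1)) (by omega)
  set C₀ : ℝ := (N:ℝ) ^ 2 * (4 * ρ⁻¹ ^ 2) ^ s with hC₀
  have hC₀p : 0 < C₀ := by positivity
  have hsc : ∀ n : ℕ, 4 * ρ ^ (2 * (n + 1)) * (ρ⁻¹) ^ (n + 1) = 4 * ρ ^ (n + 1) := by
    intro n
    have : ρ ^ (n + 1) * (ρ⁻¹) ^ (n + 1) = 1 := by rw [← mul_pow, mul_inv_cancel₀ hρ.ne', one_pow]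
    calc _ = 4 * ρ ^ (n + 1) * (ρ ^ (n + 1) * (ρ⁻¹) ^ (n + 1)) := by ring
      _ = _ := by rw [this, mul_one]
  have hL1 : ∀ n : ℕ, 1 ≤ (ρ⁻¹) ^ (n + 1) := fun n =>
    one_le_pow₀ ((one_le_inv₀ hρ).mpr (by linarith))
  have hr1 : ∀ n : ℕ, 4 * ρ ^ (n + 1) < 1 := by
    intro n
    have : ρ ^ (n + 1) ≤ ρ ^ 1 := pow_le_pow_of_le_one hρ.le (by linarith) (by omega)
    linarith [pow_one ρ]
  have hcpt : ∀ (x : Z) r, ENNReal.ofReal r ≤ ⊤ → IsCompact (Metric.closedBall x r) :=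
    fun x r _ => compact_closedBall hρ hρ1 hc x
      (show r < |r| + 1 by linarith [le_abs_self r]) (by positivity) le_top
  have hpos : ∀ n, 0 < ν n (Metric.ball z0 1) := by
    intro n
    have h1 := hν2 n z0 z0 1 _ (by rw [hsc]; exact hr1 n) (hL1 n) le_rfl
      (by rw [dist_self]; exact (hLp n).le)
    have h2 := (hν1 n z0).1.trans h1
    rw [pos_iff_ne_zero]
    intro h0
    rw [h0, mul_zero] at h2
    have : (0:ℝ≥0∞) < ENNReal.ofReal (N:ℝ)⁻¹ := ENNReal.ofReal_pos.mpr (by positivity)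
    exact absurd this (not_lt.mpr h2)
  have hfin : ∀ n, ν n (Metric.ball z0 1) ≠ ⊤ := fun n =>
    (lt_of_le_of_lt ((measure_mono (Metric.ball_subset_ball (hL1 n))).trans (hν1 n z0).2)
      ENNReal.ofReal_lt_top).ne
  set ν' : ℕ → Measure Z := fun n => (ν n (Metric.ball z0 1))⁻¹ • ν n with hν'
  have hap : ∀ n S, ν' n S = (ν n (Metric.ball z0 1))⁻¹ * ν n S := fun n S => by
    simp [hν', Measure.smul_apply]
  have hone : ∀ n, ν' n (Metric.ball z0 1) = 1 := fun n => by
    rw [hap, ENNReal.inv_mul_cancel (hpos n).ne' (hfin n)]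
  have hd : ∀ x y r R, 0 < r → r ≤ R → ENNReal.ofReal R ≤ ⊤ → dist x y ≤ R →
      ∀ᶠ n in atTop, ν' n (Metric.ball x R) ≤
        ENNReal.ofReal (C₀ * (R / r) ^ s) * ν' n (Metric.ball y r) := by
    intro x y r R hr hrR _ hxy
    have hlim : Tendsto (fun n : ℕ => 4 * ρ ^ (n + 1)) atTop (nhds (4 * 0)) :=
      ((tendsto_pow_atTop_nhds_zero_of_lt_one hρ.le (by linarith)).comp
        (tendsto_add_atTop_nat 1)).const_mul 4
    have hlim2 : Tendsto (fun n : ℕ => (ρ⁻¹) ^ (n + 1)) atTop atTop :=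
      (tendsto_pow_atTop_atTop_of_one_lt ((one_lt_inv₀ hρ).mpr (by linarith))).comp
        (tendsto_add_atTop_nat 1)
    filter_upwards [hlim.eventually (gt_mem_nhds (by simpa using hr)),
      hlim2.eventually_ge_atTop R] with n hn hn2
    rw [hap, hap, mul_left_comm]
    exact mul_le_mul_right (hν2 n x y r R (by rw [hsc]; exact hn) hrR hn2 hxy) _
  have hbd : ∀ R : ℝ, 1 ≤ R → ∀ᶠ n in atTop, ν' n (Metric.ball z0 R) ≤
      ENNReal.ofReal (C₀ * (R / 1) ^ s) := by
    intro R hR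
    filter_upwards [hd z0 z0 1 R one_pos hR le_top (by rw [dist_self]; linarith)] with n hn
    rwa [hone, mul_one] at hn
  obtain ⟨μ, hD, hU, hLo⟩ := limit_doubling ENNReal.zero_lt_top hcpt ν'
    (fun n => ⟨fun K hK => by
      obtain ⟨k, hk⟩ := compact_bound (hLp n) hK
      have := hk (ν n) (ENNReal.ofReal N) (fun x => (hν1 n x).2)
      rw [hap]
      exact ENNReal.mul_lt_top (ENNReal.inv_lt_top.mpr (hpos n))
        (lt_of_le_of_lt this (ENNReal.mul_lt_top (by simp) ENNReal.ofReal_lt_top))⟩)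
    (fun K hK => by
      obtain ⟨R, hR⟩ := hK.isBounded.subset_ball z0
      refine ⟨(C₀ * (max R 1 / 1) ^ s).toNNReal, ?_⟩
      filter_upwards [hbd (max R 1) (le_max_right _ _)] with n hn
      exact (measure_mono (hR.trans (Metric.ball_subset_ball (le_max_left _ _)))).trans hn)
    hC₀p.le hs0 hd
  have hDt := hD ⊤ le_top
  refine ⟨μ, C₀ * 6 ^ s, by positivity, hDt, fun x r hr => ⟨?_, ?_⟩⟩
  · have h3 : (1:ℝ≥0∞) ≤ μ (Metric.ball z0 (3 * 1)) :=
      hLo z0 1 1 one_pos le_top (Eventually.of_forall fun n => (hone n).ge)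
    refine dbl_pos hDt (x := z0) (R := max r (max 3 (dist z0 x))) hr (le_max_left _ _) le_top
      ((le_max_right _ _).trans (le_max_right _ _)) ?_
    refine lt_of_lt_of_le zero_lt_one (h3.trans (measure_mono (Metric.ball_subset_ball ?_)))
    rw [mul_one]
    exact (le_max_left _ _).trans (le_max_right _ _)
  · have h1 := hU z0 (r + dist x z0 + 1) _ (by positivity) le_top (hbd (2 * (r + dist x z0 + 1))
      (by linarith [dist_nonneg (x := x) (y := z0)]))
    refine lt_of_le_of_lt ((measure_mono ?_).trans h1) ENNReal.ofReal_lt_top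
    apply Metric.ball_subset_ball'
    linarith

end PorousQS
end

section
open scoped NNReal ENNReal
open MeasureTheory
namespace PorousQS

/-- A gauge function at admissible scales. -/
structure Gauge (Z : Type*) [MetricSpace Z] (A : ℝ≥0∞) where
  φ : Z → ℝ → ℝ
  c0 : ℝ
  c1 : ℝ
  α : ℝ
  hc0 : 1 ≤ c0
  hc1 : 0 < c1
  hα : 0 < α
  pos : ∀ x r, 0 < r → ENNReal.ofReal r ≤ A → 0 < φ x r
  mono : ∀ x r R, 0 < r → r ≤ R → ENNReal.ofReal R ≤ A → φ x r ≤ φ x R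
  dbl : ∀ x y r R, 0 < r → r ≤ R → ENNReal.ofReal R ≤ A → dist x y ≤ R →
    φ x R ≤ c0 * (R / r) * φ y r
  rev : ∀ x r R, 0 < r → r ≤ R → ENNReal.ofReal R ≤ A → φ x r ≤ c1 * (r / R) ^ α * φ x R

lemma exists_gauge {Z : Type*} [MetricSpace Z] [MeasurableSpace Z] [BorelSpace Z]
    {μ : Measure Z} {C s : ℝ} {A : ℝ≥0∞} (hC : 1 ≤ C) (hs : 0 < s) (hD : Dbl μ C s A)
    (hpf : ∀ x r, 0 < r → ENNReal.ofReal r ≤ A →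
      0 < μ (Metric.ball x r) ∧ μ (Metric.ball x r) < ⊤)
    {K : ℝ} (hK : 1 ≤ K) (hU : UnifPerf Z K) (hA : A ≤ Metric.ediam (Set.univ : Set Z)) :
    ∃ G : Gauge Z A, ∀ x r, 0 < r → ENNReal.ofReal r ≤ A →
      μ (Metric.ball x r) = ENNReal.ofReal (G.φ x r ^ s) := by
  let m : Z → ℝ → ℝ := fun x r => (μ (Metric.ball x r)).toReal
  have hmpos : ∀ x r, 0 < r → ENNReal.ofReal r ≤ A → 0 < m x r := fun x r h1 h2 =>
    ENNReal.toReal_pos (hpf x r h1 h2).1.ne' (hpf x r h1 h2).2.ne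
  have hmu : ∀ x r, 0 < r → ENNReal.ofReal r ≤ A →
      μ (Metric.ball x r) = ENNReal.ofReal (m x r) := fun x r h1 h2 =>
    (ENNReal.ofReal_toReal (hpf x r h1 h2).2.ne).symm
  have hmono : ∀ x r R, 0 < r → r ≤ R → ENNReal.ofReal R ≤ A → m x r ≤ m x R :=
    fun x r R hr hrR hR => ENNReal.toReal_mono (hpf x R (hr.trans_le hrR) hR).2.ne
      (measure_mono (Metric.ball_subset_ball hrR))
  have hmd : ∀ x y r R, 0 < r → r ≤ R → ENNReal.ofReal R ≤ A → dist x y ≤ R →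
      m x R ≤ C * (R / r) ^ s * m y r := by
    intro x y r R hr hrR hR hxy
    have h := hD x y r R hr hrR hR hxy
    have hR0 := hr.trans_le hrR
    have hra := adm_mono hrR hR
    rw [hmu x R hR0 hR, hmu y r hr hra, ← ENNReal.ofReal_mul (by positivity)] at h
    exact (ENNReal.ofReal_le_ofReal_iff
      (mul_nonneg (by positivity) (hmpos y r hr hra).le)).mp h
  -- reverse doubling
  set σ : ℝ := 1 / (4 * K) with hσ
  have hσ0 : 0 < σ := by positivity
  have hσ1 : σ ≤ 1 / 4 := by rw [hσ]; apply one_div_le_one_div_of_le <;> linarith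
  set θ : ℝ := 1 / (C * (4 * K) ^ s) with hθ
  have h4K : 1 < (4 * K) ^ s := Real.one_lt_rpow (by linarith) hs
  have hden : 1 < C * (4 * K) ^ s := by nlinarith
  have hθ0 : 0 < θ := by positivity
  have hθ1 : θ < 1 := by rw [hθ, div_lt_one (by positivity)]; exact hden
  have hrev1 : ∀ x R, 0 < R → ENNReal.ofReal R ≤ A → m x (σ * R) ≤ (1 - θ) * m x R := by
    intro x R hR hRA
    obtain ⟨u, hu1, hu2⟩ := hU x (R / 2) (by positivity) (adm_mono (by linarith) (hRA.trans hA))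
    have hσR : 0 < σ * R := by positivity
    have hσRA : ENNReal.ofReal (σ * R) ≤ A := adm_mono (by nlinarith) hRA
    have h2 : R / 2 / K = 2 * (σ * R) := by rw [hσ]; field_simp; norm_num
    have hdisj : Disjoint (Metric.ball x (σ * R)) (Metric.ball u (σ * R)) :=
      Metric.ball_disjoint_ball (by linarith)
    have hsub : Metric.ball x (σ * R) ∪ Metric.ball u (σ * R) ⊆ Metric.ball x R := by
      apply Set.union_subset
      · exact Metric.ball_subset_ball (by nlinarith)
      · apply Metric.ball_subset_ball'
        rw [dist_comm]; nlinarith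
    have h3 : m x (σ * R) + m u (σ * R) ≤ m x R := by
      have h4 := measure_mono (μ := μ) hsub
      rw [measure_union hdisj Metric.isOpen_ball.measurableSet, hmu x _ hσR hσRA,
        hmu u _ hσR hσRA, hmu x _ hR hRA, ← ENNReal.ofReal_add (hmpos _ _ hσR hσRA).le
        (hmpos _ _ hσR hσRA).le] at h4
      exact (ENNReal.ofReal_le_ofReal_iff (hmpos _ _ hR hRA).le).mp h4
    have h5 := hmd x u (σ * R) R hσR (by nlinarith) hRA (by linarith)
    have h6 : R / (σ * R) = 4 * K := by rw [hσ]; field_simp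
    rw [h6] at h5
    have h7 : θ * m x R ≤ m u (σ * R) := by
      rw [hθ, one_div, inv_mul_le_iff₀ (by positivity)]
      exact h5
    linarith
  set lam : ℝ := (1 - θ) ^ s⁻¹ with hlam
  have hlam0 : 0 < lam := Real.rpow_pos_of_pos (by linarith) _
  have hlam1 : lam < 1 := Real.rpow_lt_one (by linarith) (by linarith) (by positivity)
  let φ : Z → ℝ → ℝ := fun x r => m x r ^ s⁻¹
  have hφ1 : ∀ x R, 0 < R → ENNReal.ofReal R ≤ A → φ x (σ * R) ≤ lam * φ x R := by
    intro x R hR hRA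
    have hσRA : ENNReal.ofReal (σ * R) ≤ A := adm_mono (by nlinarith) hRA
    change m x (σ * R) ^ s⁻¹ ≤ (1 - θ) ^ s⁻¹ * m x R ^ s⁻¹
    rw [← Real.mul_rpow (by linarith) (hmpos x R hR hRA).le]
    exact Real.rpow_le_rpow (hmpos _ _ (by positivity) hσRA).le (hrev1 x R hR hRA) (by positivity)
  have hφn : ∀ x R, 0 < R → ENNReal.ofReal R ≤ A → ∀ n : ℕ,
      φ x (σ ^ n * R) ≤ lam ^ n * φ x R := by
    intro x R hR hRA n
    induction n with
    | zero => simp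
    | succ n ih =>
      have hle : σ ^ n ≤ 1 := pow_le_one₀ hσ0.le (by linarith)
      have := hφ1 x (σ ^ n * R) (by positivity) (adm_mono (by nlinarith) hRA)
      calc φ x (σ ^ (n + 1) * R) = φ x (σ * (σ ^ n * R)) := by congr 1; ring
        _ ≤ lam * φ x (σ ^ n * R) := this
        _ ≤ lam * (lam ^ n * φ x R) := by gcongr
        _ = _ := by ring
  have hφmono : ∀ x r R, 0 < r → r ≤ R → ENNReal.ofReal R ≤ A → φ x r ≤ φ x R :=
    fun x r R hr hrR hR => Real.rpow_le_rpow (hmpos x r hr (adm_mono hrR hR)).le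
      (hmono x r R hr hrR hR) (by positivity)
  set α : ℝ := Real.log lam / Real.log σ with hα
  have hlogσ : Real.log σ < 0 := Real.log_neg hσ0 (by linarith)
  have hα0 : 0 < α := div_pos_of_neg_of_neg (Real.log_neg hlam0 hlam1) hlogσ
  have hσα : σ ^ α = lam := by
    rw [Real.rpow_def_of_pos hσ0, hα, mul_div_cancel₀ _ hlogσ.ne, Real.exp_log hlam0]
  refine ⟨⟨φ, C ^ s⁻¹, lam⁻¹, α, Real.one_le_rpow hC (by positivity), by positivity, hα0,
    fun x r hr hrA => Real.rpow_pos_of_pos (hmpos x r hr hrA) _, hφmono, ?_, ?_⟩, ?_⟩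
  · intro x y r R hr hrR hR hxy
    have h := hmd x y r R hr hrR hR hxy
    have hR0 := hr.trans_le hrR
    have hra := adm_mono hrR hR
    calc m x R ^ s⁻¹ ≤ (C * (R / r) ^ s * m y r) ^ s⁻¹ :=
          Real.rpow_le_rpow (hmpos x R hR0 hR).le h (by positivity)
      _ = C ^ s⁻¹ * ((R / r) ^ s) ^ s⁻¹ * m y r ^ s⁻¹ := by
          rw [Real.mul_rpow (by positivity) (hmpos y r hr hra).le,
            Real.mul_rpow (by positivity) (by positivity)]
      _ = C ^ s⁻¹ * (R / r) * m y r ^ s⁻¹ := by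
          rw [← Real.rpow_mul (by positivity), mul_inv_cancel₀ hs.ne', Real.rpow_one]
  · intro x r R hr hrR hR
    have hR0 := hr.trans_le hrR
    obtain ⟨n, hn1, hn2⟩ := exists_nat_pow_near_of_lt_one (show 0 < r / R by positivity)
      (by rw [div_le_one hR0]; exact hrR) hσ0 (by linarith)
    have hle : σ ^ n ≤ 1 := pow_le_one₀ hσ0.le (by linarith)
    have h1 : r ≤ σ ^ n * R := by rwa [div_le_iff₀ hR0] at hn2
    have h2 : lam ^ (n + 1) ≤ (r / R) ^ α := by
      rw [← hσα, ← Real.rpow_natCast, ← Real.rpow_mul hσ0.le, mul_comm, Real.rpow_mul hσ0.le,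
        Real.rpow_natCast]
      exact Real.rpow_le_rpow (by positivity) hn1.le hα0.le
    have hφR : 0 < φ x R := Real.rpow_pos_of_pos (hmpos x R hR0 hR) _
    calc φ x r ≤ φ x (σ ^ n * R) := hφmono x r _ hr h1 (adm_mono (by nlinarith) hR)
      _ ≤ lam ^ n * φ x R := hφn x R hR0 hR n
      _ = lam⁻¹ * lam ^ (n + 1) * φ x R := by rw [pow_succ]; field_simp
      _ ≤ _ := by gcongr
  · intro x r hr hrA
    rw [hmu x r hr hrA]
    change _ = ENNReal.ofReal ((m x r ^ s⁻¹) ^ s)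
    rw [← Real.rpow_mul (hmpos x r hr hrA).le, inv_mul_cancel₀ hs.ne', Real.rpow_one]

end PorousQS
end

section
open scoped NNReal ENNReal
open MeasureTheory
namespace PorousQS

/-- Truncation at the admissible scale. -/
structure Trunc (A : ℝ≥0∞) (κ : ℝ → ℝ) : Prop where
  pos : ∀ d, 0 < d → 0 < κ d
  adm : ∀ d, 0 < d → ENNReal.ofReal (κ d) ≤ A
  le : ∀ d, 0 < d → κ d ≤ d
  ge : ∀ d R, ENNReal.ofReal R ≤ A → min d R ≤ κ d

lemma abs_min_sub_min {a b R d : ℝ} (ha : 0 ≤ a) (hb : 0 ≤ b) (hR : 0 ≤ R) (hd : |a - b| ≤ d) :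
    |min a R - min b R| ≤ min d R := by
  apply le_min
  · refine le_trans ?_ hd
    have := abs_min_sub_min_le_max a R b R
    simpa using this
  · rw [abs_le]
    constructor
    · have h1 : min b R ≤ R := min_le_right _ _
      have h2 : 0 ≤ min a R := le_min ha hR
      linarith
    · have h1 : min a R ≤ R := min_le_right _ _
      have h2 : 0 ≤ min b R := le_min hb hR
      linarith

/-- The elementary pseudodistances. -/
noncomputable def Gauge.term {Z : Type*} [MetricSpace Z] {A : ℝ≥0∞} (G : Gauge Z A) (z : Z) (R : ℝ)
    (x y : Z) : ℝ := G.φ z R / R * |min (dist z x) R - min (dist z y) R|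

lemma Gauge.term_comm {Z : Type*} [MetricSpace Z] {A : ℝ≥0∞} (G : Gauge Z A) (z : Z) (R : ℝ)
    (x y : Z) : G.term z R x y = G.term z R y x := by
  unfold Gauge.term
  rw [abs_sub_comm]

lemma Gauge.term_nonneg {Z : Type*} [MetricSpace Z] {A : ℝ≥0∞} (G : Gauge Z A) {z : Z} {R : ℝ}
    (hR : 0 < R) (hRA : ENNReal.ofReal R ≤ A) (x y : Z) : 0 ≤ G.term z R x y := by
  unfold Gauge.term
  have := G.pos z R hR hRA
  positivity

lemma Gauge.term_bound_near {Z : Type*} [MetricSpace Z] {A : ℝ≥0∞} (G : Gauge Z A) {κ : ℝ → ℝ}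
    (hκ : Trunc A κ) {x y z : Z} {R : ℝ} (hxy : x ≠ y) (hR : 0 < R) (hRA : ENNReal.ofReal R ≤ A)
    (hz : dist z x < R) : G.term z R x y ≤ G.c0 * G.φ x (κ (dist x y)) := by
  have hd : 0 < dist x y := dist_pos.mpr hxy
  set q := κ (dist x y) with hq
  have hq0 : 0 < q := hκ.pos _ hd
  have hqA : ENNReal.ofReal q ≤ A := hκ.adm _ hd
  have habs : |min (dist z x) R - min (dist z y) R| ≤ min (dist x y) R := by
    apply abs_min_sub_min dist_nonneg dist_nonneg hR.le
    rw [dist_comm z x, dist_comm z y]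
    exact abs_dist_sub_le x y z
  have hφz := G.pos z R hR hRA
  unfold Gauge.term
  rcases le_total R q with h | h
  · calc G.φ z R / R * |min (dist z x) R - min (dist z y) R| ≤ G.φ z R / R * R := by
          gcongr
          exact habs.trans (min_le_right _ _)
      _ = G.φ z R := by field_simp
      _ ≤ G.φ z q := G.mono z R q hR h hqA
      _ ≤ G.c0 * (q / q) * G.φ x q := G.dbl z x q q hq0 le_rfl hqA (by linarith)
      _ = _ := by rw [div_self hq0.ne', mul_one]
  · have h1 := G.dbl z x q R hq0 h hRA hz.le
    have h2 : min (dist x y) R ≤ q := hκ.ge _ _ hRA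
    calc G.φ z R / R * |min (dist z x) R - min (dist z y) R| ≤ G.φ z R / R * q := by
          gcongr
          exact habs.trans h2
      _ ≤ (G.c0 * (R / q) * G.φ x q) / R * q := by gcongr
      _ = _ := by field_simp

lemma Gauge.term_bound {Z : Type*} [MetricSpace Z] {A : ℝ≥0∞} (G : Gauge Z A) {κ : ℝ → ℝ}
    (hκ : Trunc A κ) {c2 : ℝ} (hc2 : 1 ≤ c2)
    (h4 : ∀ x y, x ≠ y → G.φ y (κ (dist x y)) ≤ c2 * G.φ x (κ (dist x y)))
    {x y z : Z} {R : ℝ} (hxy : x ≠ y) (hR : 0 < R) (hRA : ENNReal.ofReal R ≤ A) :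
    G.term z R x y ≤ G.c0 * c2 * G.φ x (κ (dist x y)) := by
  have hd : 0 < dist x y := dist_pos.mpr hxy
  have hc0 := G.hc0
  have hp := G.pos x _ (hκ.pos _ hd) (hκ.adm _ hd)
  rcases lt_or_ge (dist z x) R with h | h
  · refine (G.term_bound_near hκ hxy hR hRA h).trans ?_
    gcongr
    nlinarith
  rcases lt_or_ge (dist z y) R with h' | h'
  · rw [G.term_comm]
    refine (G.term_bound_near hκ hxy.symm hR hRA h').trans ?_
    rw [dist_comm y x, mul_assoc]
    have := h4 x y hxy
    gcongr
  · unfold Gauge.term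
    rw [min_eq_right h, min_eq_right h', sub_self, abs_zero, mul_zero]
    positivity

lemma Gauge.exists_delta {Z : Type*} [MetricSpace Z] {A : ℝ≥0∞} (G : Gauge Z A) {κ : ℝ → ℝ}
    (hκ : Trunc A κ) {c2 : ℝ} (hc2 : 1 ≤ c2)
    (h4 : ∀ x y, x ≠ y → G.φ y (κ (dist x y)) ≤ c2 * G.φ x (κ (dist x y))) :
    ∃ δ : Z → Z → ℝ, (∀ x, δ x x = 0) ∧ (∀ x y, δ x y = δ y x) ∧
      (∀ x y z, δ x z ≤ δ x y + δ y z) ∧ ∀ x y, x ≠ y →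
        G.φ x (κ (dist x y)) ≤ δ x y ∧ δ x y ≤ G.c0 * c2 * G.φ x (κ (dist x y)) := by
  let I := {p : Z × ℝ // 0 < p.2 ∧ ENNReal.ofReal p.2 ≤ A}
  let δ : Z → Z → ℝ := fun x y => ⨆ p : I, G.term p.1.1 p.1.2 x y
  have hnn : ∀ x y, 0 ≤ δ x y := fun x y =>
    Real.iSup_nonneg (fun p => G.term_nonneg p.2.1 p.2.2 x y)
  have hself : ∀ (x : Z) (p : I), G.term p.1.1 p.1.2 x x = 0 := fun x p => by
    simp [Gauge.term]
  have hbdd : ∀ x y, BddAbove (Set.range fun p : I => G.term p.1.1 p.1.2 x y) := by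
    intro x y
    by_cases hxy : x = y
    · subst hxy
      exact ⟨0, by rintro _ ⟨p, rfl⟩; exact (hself x p).le⟩
    · exact ⟨_, by rintro _ ⟨p, rfl⟩; exact G.term_bound hκ hc2 h4 hxy p.2.1 p.2.2⟩
  refine ⟨δ, ?_, ?_, ?_, ?_⟩
  · intro x
    exact le_antisymm (Real.iSup_le (fun p => (hself x p).le) le_rfl) (hnn x x)
  · intro x y
    change (⨆ p : I, G.term p.1.1 p.1.2 x y) = ⨆ p : I, G.term p.1.1 p.1.2 y x
    congr 1
    funext p
    exact G.term_comm _ _ _ _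
  · intro x y z
    refine Real.iSup_le (fun p => ?_) (add_nonneg (hnn x y) (hnn y z))
    have h1 : G.term p.1.1 p.1.2 x y ≤ δ x y := le_ciSup (hbdd x y) p
    have h2 : G.term p.1.1 p.1.2 y z ≤ δ y z := le_ciSup (hbdd y z) p
    refine le_trans ?_ (add_le_add h1 h2)
    unfold Gauge.term
    rw [← mul_add]
    have := G.pos p.1.1 p.1.2 p.2.1 p.2.2
    have hp := p.2.1
    gcongr
    exact abs_sub_le _ _ _
  · intro x y hxy
    have hd : 0 < dist x y := dist_pos.mpr hxy
    have hq0 := hκ.pos _ hd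
    have hqA := hκ.adm _ hd
    have hp := G.pos x _ hq0 hqA
    have hc0 := G.hc0
    constructor
    · have h1 : G.term x (κ (dist x y)) x y ≤ δ x y :=
        le_ciSup (hbdd x y) (⟨(x, κ (dist x y)), hq0, hqA⟩ : I)
      refine le_trans (le_of_eq ?_) h1
      unfold Gauge.term
      rw [dist_self, min_eq_left hq0.le, min_eq_right (hκ.le _ hd), zero_sub, abs_neg,
        abs_of_pos hq0]
      field_simp
    · exact Real.iSup_le (fun p => G.term_bound hκ hc2 h4 hxy p.2.1 p.2.2) (by positivity)

lemma Gauge.scale {Z : Type*} [MetricSpace Z] {A : ℝ≥0∞} (G : Gauge Z A) {x : Z} {r R1 : ℝ}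
    (hr : 0 < r) (hR1 : 0 < R1) (hA : ENNReal.ofReal R1 ≤ A) (hle : r ≤ G.φ x R1) :
    ∃ R, 0 < R ∧ ENNReal.ofReal (2 * R) ≤ A ∧ G.φ x R < r ∧ r ≤ G.φ x (2 * R) := by
  classical
  have hex : ∃ n : ℕ, G.φ x (R1 / 2 ^ n) < r := by
    have hlt : (1 / 2 : ℝ) ^ G.α < 1 := Real.rpow_lt_one (by norm_num) (by norm_num) G.hα
    have hp := G.pos x R1 hR1 hA
    have hc1 := G.hc1
    obtain ⟨n, hn⟩ := exists_pow_lt_of_lt_one (show 0 < r / (G.c1 * G.φ x R1) by positivity) hlt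
    refine ⟨n, ?_⟩
    have h1 := G.rev x (R1 / 2 ^ n) R1 (by positivity)
      (div_le_self hR1.le (one_le_pow₀ (by norm_num))) hA
    have h2 : R1 / 2 ^ n / R1 = (1 / 2 : ℝ) ^ n := by field_simp; simp
    have h3 : (((1:ℝ) / 2) ^ n) ^ G.α = (((1:ℝ) / 2) ^ G.α) ^ n := by
      rw [← Real.rpow_natCast, ← Real.rpow_mul (by norm_num), mul_comm (n : ℝ),
        Real.rpow_mul (by norm_num), Real.rpow_natCast]
    rw [h2, h3] at h1
    refine lt_of_le_of_lt h1 ?_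
    rw [lt_div_iff₀ (by positivity)] at hn
    linarith
  have hspec := Nat.find_spec hex
  have hn0 : Nat.find hex ≠ 0 := by
    intro h0
    rw [h0, pow_zero, div_one] at hspec
    linarith
  obtain ⟨n, hn⟩ := Nat.exists_eq_succ_of_ne_zero hn0
  have hmin := Nat.find_min hex (m := n) (by omega)
  rw [hn] at hspec
  have e : 2 * (R1 / 2 ^ n.succ) = R1 / 2 ^ n := by rw [Nat.succ_eq_add_one, pow_succ]; field_simp
  refine ⟨R1 / 2 ^ n.succ, by positivity, ?_, hspec, ?_⟩
  · rw [e]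
    exact adm_mono (div_le_self hR1.le (one_le_pow₀ (by norm_num))) hA
  · rw [e]
    exact not_lt.mp hmin

lemma exists_metric_space {Z : Type u} (D : Z → Z → ℝ) (h0 : ∀ x, D x x = 0)
    (hs : ∀ x y, D x y = D y x) (ht : ∀ x y z, D x z ≤ D x y + D y z)
    (hp : ∀ x y, x ≠ y → 0 < D x y) :
    ∃ (W : Type u) (_ : MetricSpace W) (e : Z ≃ W), ∀ x y, dist (e x) (e y) = D x y :=
  ⟨Z, { dist := D, dist_self := h0, dist_comm := hs, dist_triangle := ht,
        eq_of_dist_eq_zero := by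
          intro x y hxy
          by_contra hne
          exact (hp x y hne).ne' hxy }, Equiv.refl Z, fun _ _ => rfl⟩

lemma exists_regular {Z : Type u} [MetricSpace Z] [CompleteSpace Z] [MeasurableSpace Z]
    [BorelSpace Z] {A E : ℝ≥0∞} (G : Gauge Z A)
    {μ : Measure Z} {s : ℝ} (hs : 0 < s)
    (hμ : ∀ x r, 0 < r → ENNReal.ofReal r ≤ A → μ (Metric.ball x r) = ENNReal.ofReal (G.φ x r ^ s))
    {κ : ℝ → ℝ} (hκ : Trunc A κ) {D : Z → Z → ℝ} {c3 K' : ℝ} (hc3 : 1 ≤ c3) (hK' : 0 < K')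
    (h0 : ∀ x, D x x = 0) (hsym : ∀ x y, D x y = D y x) (ht : ∀ x y z, D x z ≤ D x y + D y z)
    (hcmp : ∀ x y, x ≠ y → G.φ x (κ (dist x y)) ≤ c3 * D x y ∧
      D x y ≤ c3 * G.φ x (κ (dist x y)))
    (hKd : ∀ x y : Z, x ≠ y → dist x y ≤ K' * κ (dist x y))
    (hE : ∀ x y, ENNReal.ofReal (D x y) ≤ E)
    (hiii : ∀ x r, 0 < r → ENNReal.ofReal r ≤ E →
      (∃ R1, 0 < R1 ∧ ENNReal.ofReal R1 ≤ A ∧ r ≤ G.φ x R1) ∧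
      ∀ y, x ≠ y → D x y < r → G.φ x (κ (dist x y)) < r) :
    ∃ (W : Type u) (_ : MetricSpace W) (f : Z ≃ₜ W),
      AhlforsRegular W s ∧ IsQuasisymmetric (f : Z → W) := by
  have hc0 := G.hc0
  have hc1 := G.hc1
  have hφp : ∀ x y, x ≠ y → 0 < G.φ x (κ (dist x y)) := fun x y hxy =>
    G.pos x _ (hκ.pos _ (dist_pos.mpr hxy)) (hκ.adm _ (dist_pos.mpr hxy))
  have hDp : ∀ x y, x ≠ y → 0 < D x y := by
    intro x y hxy
    have h1 := (hcmp x y hxy).1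
    have h2 := hφp x y hxy
    by_contra hcon
    nlinarith
  obtain ⟨W, instW, e, he⟩ := exists_metric_space D h0 hsym ht hDp
  have hqs : IsQuasisymmetric e := by
    set M : ℝ := max (G.c1 * K' ^ G.α) (G.c0 * K') with hM
    have hM0 : 0 < M := lt_max_of_lt_right (by positivity)
    obtain ⟨η, hη⟩ := exists_homeo_pow (c3 * c3 * M) G.α (by positivity) G.hα
    refine ⟨η, ?_⟩
    apply qs_of_dist
    intro x y z t hd
    rw [he, he, hη]
    by_cases hxy : x = y
    · subst hxy
      rw [h0]
      by_cases hxz : x = z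
      · subst hxz; rw [h0, mul_zero]
      · have := hDp x z hxz
        positivity
    have hxz : x ≠ z := by
      rintro rfl
      rw [dist_self, mul_zero] at hd
      exact hxy (dist_le_zero.mp hd)
    have hdy : 0 < dist x y := dist_pos.mpr hxy
    have hdz : 0 < dist x z := dist_pos.mpr hxz
    set a := κ (dist x y) with ha
    set b := κ (dist x z) with hb
    have ha0 : 0 < a := hκ.pos _ hdy
    have hb0 : 0 < b := hκ.pos _ hdz
    have hφb := hφp x z hxz
    have hab : a ≤ t * K' * b := by
      calc a ≤ dist x y := hκ.le _ hdy
        _ ≤ t * dist x z := hd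
        _ ≤ t * (K' * b) := by have := hKd x z hxz; gcongr
        _ = _ := by ring
    have ht0 : (0:ℝ) ≤ t := t.2
    have hkey : G.φ x a ≤ M * ((t:ℝ) ^ G.α + t) * G.φ x b := by
      rcases le_total a b with h | h
      · have h1 := G.rev x a b ha0 h (hκ.adm _ hdz)
        have h2 : a / b ≤ K' * t := by rw [div_le_iff₀ hb0]; linarith
        have h3 : (a / b) ^ G.α ≤ K' ^ G.α * (t:ℝ) ^ G.α := by
          rw [← Real.mul_rpow hK'.le ht0]
          exact Real.rpow_le_rpow (by positivity) h2 G.hα.le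
        calc G.φ x a ≤ G.c1 * (a / b) ^ G.α * G.φ x b := h1
          _ ≤ G.c1 * (K' ^ G.α * (t:ℝ) ^ G.α) * G.φ x b := by gcongr
          _ = (G.c1 * K' ^ G.α) * (t:ℝ) ^ G.α * G.φ x b := by ring
          _ ≤ M * ((t:ℝ) ^ G.α + t) * G.φ x b := by
            gcongr
            · exact le_max_left _ _
            · linarith
      · have h1 := G.dbl x x b a hb0 h (hκ.adm _ hdy) (by rw [dist_self]; exact ha0.le)
        have h2 : a / b ≤ K' * t := by rw [div_le_iff₀ hb0]; linarith
        calc G.φ x a ≤ G.c0 * (a / b) * G.φ x b := h1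
          _ ≤ G.c0 * (K' * t) * G.φ x b := by gcongr
          _ = (G.c0 * K') * t * G.φ x b := by ring
          _ ≤ M * ((t:ℝ) ^ G.α + t) * G.φ x b := by
            gcongr
            · exact le_max_right _ _
            · have : 0 ≤ (t:ℝ) ^ G.α := Real.rpow_nonneg ht0 _
              linarith
    have hpow : 0 ≤ (t:ℝ) ^ G.α := Real.rpow_nonneg ht0 _
    calc D x y ≤ c3 * G.φ x a := (hcmp x y hxy).2
      _ ≤ c3 * (M * ((t:ℝ) ^ G.α + t) * G.φ x b) := by gcongr
      _ ≤ c3 * (M * ((t:ℝ) ^ G.α + t) * (c3 * D x z)) := by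
        have := (hcmp x z hxz).1
        gcongr
      _ = _ := by ring
  let f : Z ≃ₜ W := ⟨e, qs_continuous hqs, qs_continuous (qs_symm e hqs)⟩
  let iM : MeasurableSpace W := borel W
  have iB : BorelSpace W := ⟨rfl⟩
  refine ⟨W, instW, f, ⟨complete_of_qs e hqs, iM, iB, ?_⟩, hqs⟩
  set C : ℝ := max 1 ((2 * G.c0 * c3) ^ s) with hC
  have hC1 : 1 ≤ C := le_max_left _ _
  have h2c : 0 < 2 * G.c0 * c3 := by positivity
  refine ⟨μ.map f, C, hC1, ?_⟩
  intro w r hr hrE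
  obtain ⟨x, rfl⟩ := f.surjective w
  have hmap : (μ.map f) (Metric.ball (f x) r) = μ {y | D x y < r} := by
    rw [Measure.map_apply f.continuous.measurable Metric.isOpen_ball.measurableSet]
    congr 1
    ext y
    change dist (e y) (e x) < r ↔ D x y < r
    rw [he, hsym]
  have hrE' : ENNReal.ofReal r ≤ E := by
    refine hrE.trans ?_
    change Metric.ediam (Set.univ : Set W) ≤ E
    apply Metric.ediam_le
    intro p _ q _
    obtain ⟨p', rfl⟩ := e.surjective p
    obtain ⟨q', rfl⟩ := e.surjective q
    rw [edist_dist, he]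
    exact hE _ _
  obtain ⟨⟨R1, hR1, hR1A, hrR1⟩, hin⟩ := hiii x r hr hrE'
  have hhalf : ∀ R, 0 < R → ENNReal.ofReal (2 * R) ≤ A → G.φ x (2 * R) ≤ 2 * G.c0 * G.φ x R := by
    intro R hR hRA
    have := G.dbl x x R (2 * R) hR (by linarith) hRA (by rw [dist_self]; linarith)
    calc _ ≤ _ := this
      _ = _ := by field_simp
  rw [hmap]
  constructor
  · obtain ⟨R, hR, hRA, h1, h2⟩ := G.scale (r := r / c3) (by positivity) hR1 hR1A
      ((div_le_self hr.le hc3).trans hrR1)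
    have hRA' : ENNReal.ofReal R ≤ A := adm_mono (by linarith) hRA
    have hsub : Metric.ball x R ⊆ {y | D x y < r} := by
      intro y hy
      by_cases hxy : x = y
      · subst hxy
        change D x x < r
        rw [h0]; exact hr
      have hd : 0 < dist x y := dist_pos.mpr hxy
      have hyR : dist x y < R := by rw [dist_comm]; exact hy
      have h3 : G.φ x (κ (dist x y)) ≤ G.φ x R :=
        G.mono x _ R (hκ.pos _ hd) ((hκ.le _ hd).trans hyR.le) hRA'
      calc D x y ≤ c3 * G.φ x (κ (dist x y)) := (hcmp x y hxy).2
        _ ≤ c3 * G.φ x R := by gcongr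
        _ < c3 * (r / c3) := by gcongr
        _ = r := by field_simp
    refine le_trans ?_ (measure_mono hsub)
    rw [hμ x R hR hRA']
    apply ENNReal.ofReal_le_ofReal
    have h4 : r ≤ 2 * G.c0 * c3 * G.φ x R := by
      have := h2.trans (hhalf R hR hRA)
      rw [div_le_iff₀ (by positivity)] at this
      linarith
    have h5 : r ^ s ≤ (2 * G.c0 * c3) ^ s * G.φ x R ^ s := by
      rw [← Real.mul_rpow h2c.le (G.pos x R hR hRA').le]
      exact Real.rpow_le_rpow hr.le h4 hs.le
    rw [inv_mul_le_iff₀ (by positivity)]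
    refine h5.trans ?_
    have := Real.rpow_nonneg (G.pos x R hR hRA').le s
    gcongr
    exact le_max_right _ _
  · obtain ⟨R, hR, hRA, h1, h2⟩ := G.scale hr hR1 hR1A hrR1
    have hRA' : ENNReal.ofReal R ≤ A := adm_mono (by linarith) hRA
    have hsub : {y | D x y < r} ⊆ Metric.ball x (2 * R) := by
      intro y hy
      by_cases hxy : x = y
      · subst hxy
        exact Metric.mem_ball_self (by positivity)
      have hd : 0 < dist x y := dist_pos.mpr hxy
      rw [Metric.mem_ball, dist_comm]
      by_contra hcon
      push Not at hcon
      have h3 := hin y hxy hy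
      have h4 : 2 * R ≤ κ (dist x y) := by
        have := hκ.ge (dist x y) (2 * R) hRA
        rwa [min_eq_right hcon] at this
      have h5 := G.mono x (2 * R) _ (by positivity) h4 (hκ.adm _ hd)
      linarith
    refine (measure_mono hsub).trans ?_
    rw [hμ x (2 * R) (by positivity) hRA]
    apply ENNReal.ofReal_le_ofReal
    have hp := G.pos x (2 * R) (by positivity) hRA
    calc G.φ x (2 * R) ^ s ≤ (2 * G.c0 * c3 * r) ^ s := by
          apply Real.rpow_le_rpow hp.le _ hs.le
          have h6 := hhalf R hR hRA
          calc G.φ x (2 * R) ≤ 2 * G.c0 * G.φ x R := h6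
            _ ≤ 2 * G.c0 * r := by gcongr
            _ ≤ 2 * G.c0 * r * c3 := le_mul_of_one_le_right (by positivity) hc3
            _ = _ := by ring
      _ = (2 * G.c0 * c3) ^ s * r ^ s := Real.mul_rpow h2c.le hr.le
      _ ≤ C * r ^ s := by
          gcongr
          exact le_max_right _ _

end PorousQS
end

section
open scoped NNReal ENNReal
open MeasureTheory
namespace PorousQS

lemma Dbl.weaken {Z : Type*} [MetricSpace Z] [MeasurableSpace Z] {μ : Measure Z} {C C' s : ℝ}
    {A : ℝ≥0∞} (h : Dbl μ C s A) (hC : C ≤ C') : Dbl μ C' s A := by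
  intro x y r R hr hrR hR hxy
  refine (h x y r R hr hrR hR hxy).trans ?_
  have : 0 ≤ (R / r) ^ s := Real.rpow_nonneg (div_nonneg (hr.le.trans hrR) hr.le) _
  exact mul_le_mul_left (ENNReal.ofReal_le_ofReal (by gcongr)) _

lemma core_unbdd {Z : Type u} [MetricSpace Z] [CompleteSpace Z] [Nonempty Z] {ρ : ℝ} {N : ℕ}
    (hρ : 0 < ρ) (hρ1 : ρ ≤ 1 / 20) (hN : 2 ≤ N) (hc : Count Z ρ N ⊤) {s : ℝ} (hs0 : 0 < s)
    (hs : (ρ⁻¹) ^ s = N) {K : ℝ} (hK : 1 ≤ K) (hU : UnifPerf Z K)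
    (hZ : Metric.ediam (Set.univ : Set Z) = ⊤) :
    ∃ (W : Type u) (_ : MetricSpace W) (f : Z ≃ₜ W),
      AhlforsRegular W s ∧ IsQuasisymmetric (f : Z → W) := by
  let iM : MeasurableSpace Z := borel Z
  have iB : BorelSpace Z := ⟨rfl⟩
  obtain ⟨μ, C, hC, hD, hpf⟩ := exists_measure_unbdd hρ hρ1 hN hc hs0 hs
  obtain ⟨G, hG⟩ := exists_gauge (le_max_right C 1) hs0 (hD.weaken (le_max_left C 1))
    (fun x r hr _ => hpf x r hr) hK hU hZ.ge
  have hκ : Trunc ⊤ (fun d => d) :=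
    ⟨fun d h => h, fun d _ => le_top, fun d _ => le_rfl, fun d R _ => min_le_left _ _⟩
  have hc0 := G.hc0
  have hc1 := G.hc1
  obtain ⟨δ, hδ0, hδs, hδt, hδc⟩ := G.exists_delta hκ hc0 (by
    intro x y hxy
    have hd : 0 < dist x y := dist_pos.mpr hxy
    have := G.dbl y x (dist x y) (dist x y) hd le_rfl le_top (dist_comm y x).le
    rwa [div_self hd.ne', mul_one] at this)
  have hcc : 1 ≤ G.c0 * G.c0 := by nlinarith
  have hφp : ∀ x y : Z, x ≠ y → 0 < G.φ x (dist x y) := fun x y hxy =>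
    G.pos x _ (dist_pos.mpr hxy) le_top
  refine exists_regular G hs0 hG hκ (E := ⊤) (K' := 1) hcc one_pos hδ0 hδs hδt ?_ ?_
    (fun _ _ => le_top) ?_
  · intro x y hxy
    refine ⟨?_, (hδc x y hxy).2⟩
    have h1 := (hδc x y hxy).1
    have h2 := hφp x y hxy
    exact h1.trans (le_mul_of_one_le_left (h2.le.trans h1) hcc)
  · intro x y _
    rw [one_mul]
  · intro x r hr _
    refine ⟨?_, fun y hxy h => lt_of_le_of_lt (hδc x y hxy).1 h⟩
    have hp := G.pos x 1 one_pos le_top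
    set q : ℝ := (r * G.c1 / G.φ x 1) with hq
    have hq0 : 0 < q := by positivity
    set R : ℝ := max 1 (q ^ G.α⁻¹) with hR
    have hR1 : 1 ≤ R := le_max_left _ _
    have hR0 : 0 < R := by linarith
    refine ⟨R, hR0, le_top, ?_⟩
    have h1 := G.rev x 1 R one_pos hR1 le_top
    have h2 : q ≤ R ^ G.α := by
      calc q = (q ^ G.α⁻¹) ^ G.α := by
            rw [← Real.rpow_mul hq0.le, inv_mul_cancel₀ G.hα.ne', Real.rpow_one]
        _ ≤ R ^ G.α := Real.rpow_le_rpow (by positivity) (le_max_right _ _) G.hα.le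
    have hφR := G.pos x R hR0 le_top
    have hRα : 0 < R ^ G.α := by positivity
    rw [one_div, Real.inv_rpow hR0.le] at h1
    have h3 : R ^ G.α * G.φ x 1 ≤ G.c1 * G.φ x R := by
      calc R ^ G.α * G.φ x 1 ≤ R ^ G.α * (G.c1 * (R ^ G.α)⁻¹ * G.φ x R) := by gcongr
        _ = _ := by field_simp
    have h4 : q * G.φ x 1 = r * G.c1 := by rw [hq]; field_simp
    have h5 : r * G.c1 ≤ G.c1 * G.φ x R := by
      rw [← h4]
      exact le_trans (by gcongr) h3
    rw [mul_comm r] at h5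
    exact le_of_mul_le_mul_left h5 hc1

lemma core_bdd {Z : Type u} [MetricSpace Z] [CompleteSpace Z] {ρ : ℝ} {N : ℕ}
    {d₀ : ℝ} (hd₀ : 0 < d₀) (hρ : 0 < ρ) (hρ1 : ρ ≤ 1 / 20) (hN : 2 ≤ N)
    (hc : Count Z ρ N (ENNReal.ofReal (d₀ / 2))) {s : ℝ} (hs0 : 0 < s)
    (hs : (ρ⁻¹) ^ s = N) {K : ℝ} (hK : 1 ≤ K) (hU : UnifPerf Z K)
    (hZ : Metric.ediam (Set.univ : Set Z) = ENNReal.ofReal d₀) :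
    ∃ (W : Type u) (_ : MetricSpace W) (f : Z ≃ₜ W),
      AhlforsRegular W s ∧ IsQuasisymmetric (f : Z → W) := by
  let iM : MeasurableSpace Z := borel Z
  have iB : BorelSpace Z := ⟨rfl⟩
  obtain ⟨μ, C, a, b, hC, ha, hD, hab⟩ := exists_measure_bdd hρ hρ1 hN hc hs0 hs
    (L := ρ * (d₀ / 2)) (by positivity) (by rw [mul_div_cancel_left₀ _ hρ.ne'])
  set T : ℝ := ρ * (d₀ / 2) / 6 with hT
  have hT0 : 0 < T := by positivity
  have hTd : T ≤ d₀ := by rw [hT]; nlinarith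
  have hTT : ENNReal.ofReal T ≤ ENNReal.ofReal T := le_rfl
  have hadm : ∀ {r : ℝ}, ENNReal.ofReal r ≤ ENNReal.ofReal T → r ≤ T := fun h =>
    (ENNReal.ofReal_le_ofReal_iff hT0.le).mp h
  obtain ⟨G, hG⟩ := exists_gauge (le_max_right C 1) hs0 (hD.weaken (le_max_left C 1))
    (fun x r hr hrT => ⟨dbl_pos hD hr (hadm hrT) le_rfl (by rw [dist_self]; exact hT0.le)
        (lt_of_lt_of_le (ENNReal.ofReal_pos.mpr ha) (hab x).1),
      lt_of_le_of_lt ((measure_mono (Metric.ball_subset_ball (hadm hrT))).trans (hab x).2)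
        ENNReal.ofReal_lt_top⟩) hK hU (by rw [hZ]; exact ENNReal.ofReal_le_ofReal hTd)
  have hκ : Trunc (ENNReal.ofReal T) (fun d => min d T) :=
    ⟨fun d h => lt_min h hT0, fun d _ => ENNReal.ofReal_le_ofReal (min_le_right _ _),
      fun d _ => min_le_left _ _, fun d R h => min_le_min le_rfl (hadm h)⟩
  have hc0 := G.hc0
  have hc1 := G.hc1
  -- uniform bounds at the top scale
  set τ : ℝ := a ^ s⁻¹ with hτ
  have hτ0 : 0 < τ := by positivity
  set β : ℝ := (max b a) ^ s⁻¹ with hβ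
  have hτβ : τ ≤ β := Real.rpow_le_rpow ha.le (le_max_right _ _) (by positivity)
  have hroot : ∀ x, τ ≤ G.φ x T ∧ G.φ x T ≤ β := by
    intro x
    have hp := G.pos x T hT0 hTT
    have hps : 0 < G.φ x T ^ s := by positivity
    have h := hab x
    rw [hG x T hT0 hTT] at h
    have e : G.φ x T = (G.φ x T ^ s) ^ s⁻¹ := by
      rw [← Real.rpow_mul hp.le, mul_inv_cancel₀ hs0.ne', Real.rpow_one]
    constructor
    · rw [e]
      exact Real.rpow_le_rpow ha.le ((ENNReal.ofReal_le_ofReal_iff hps.le).mp h.1) (by positivity)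
    · rw [e]
      refine Real.rpow_le_rpow hps.le ?_ (by positivity)
      have h2 := h.2.trans (ENNReal.ofReal_le_ofReal (le_max_left b a))
      exact (ENNReal.ofReal_le_ofReal_iff (ha.le.trans (le_max_right _ _))).mp h2
  set c2 : ℝ := max G.c0 (β / τ) with hc2
  have hc21 : 1 ≤ c2 := hc0.trans (le_max_left _ _)
  have hφp : ∀ x y : Z, x ≠ y → 0 < G.φ x (min (dist x y) T) := fun x y hxy =>
    G.pos x _ (lt_min (dist_pos.mpr hxy) hT0) (ENNReal.ofReal_le_ofReal (min_le_right _ _))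
  obtain ⟨δ, hδ0, hδs, hδt, hδc⟩ := G.exists_delta hκ hc21 (by
    intro x y hxy
    have hd : 0 < dist x y := dist_pos.mpr hxy
    have hφ := hφp x y hxy
    change G.φ y (min (dist x y) T) ≤ c2 * G.φ x (min (dist x y) T)
    rcases le_total (dist x y) T with h | h
    · rw [min_eq_left h] at hφ ⊢
      have := G.dbl y x (dist x y) (dist x y) hd le_rfl (ENNReal.ofReal_le_ofReal h)
        (dist_comm y x).le
      rw [div_self hd.ne', mul_one] at this
      refine this.trans ?_
      gcongr
      exact le_max_left _ _
    · rw [min_eq_right h] at hφ ⊢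
      calc G.φ y T ≤ β := (hroot y).2
        _ = β / τ * τ := by field_simp
        _ ≤ c2 * G.φ x T := by
          gcongr
          · exact le_max_right _ _
          · exact (hroot x).1)
  have hδnn : ∀ x y, 0 ≤ δ x y := by
    intro x y
    by_cases hxy : x = y
    · subst hxy; rw [hδ0]
    · exact (hφp x y hxy).le.trans (hδc x y hxy).1
  set c3 : ℝ := max (G.c0 * c2) (β / τ) with hc3
  have hc31 : 1 ≤ c3 := le_trans (by nlinarith) (le_max_left _ _)
  have hK'0 : 0 < d₀ / T := by positivity
  refine exists_regular G hs0 hG hκ (E := ENNReal.ofReal τ) (K' := d₀ / T)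
    (D := fun x y => min (δ x y) τ) hc31 hK'0 ?_ ?_ ?_ ?_ ?_ ?_ ?_
  · intro x
    change min (δ x x) τ = 0
    rw [hδ0, min_eq_left hτ0.le]
  · intro x y
    change min (δ x y) τ = min (δ y x) τ
    rw [hδs]
  · intro x y z
    change min (δ x z) τ ≤ min (δ x y) τ + min (δ y z) τ
    have h1 := hδt x y z
    have h2 := hδnn x y
    have h3 := hδnn y z
    rcases le_total (δ x y) τ with h4 | h4 <;> rcases le_total (δ y z) τ with h5 | h5
    · rw [min_eq_left h4, min_eq_left h5]
      exact (min_le_left _ _).trans h1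
    · rw [min_eq_right h5]
      exact (min_le_right _ _).trans (by linarith [le_min h2 hτ0.le])
    · rw [min_eq_right h4]
      exact (min_le_right _ _).trans (by linarith [le_min h3 hτ0.le])
    · rw [min_eq_right h4]
      exact (min_le_right _ _).trans (by linarith [le_min h3 hτ0.le])
  · intro x y hxy
    change G.φ x (min (dist x y) T) ≤ c3 * min (δ x y) τ ∧
      min (δ x y) τ ≤ c3 * G.φ x (min (dist x y) T)
    have hφ := hφp x y hxy
    obtain ⟨h1, h2⟩ := hδc x y hxy
    constructor
    · rcases le_total (δ x y) τ with h | h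
      · rw [min_eq_left h]
        exact h1.trans (le_mul_of_one_le_left (hδnn x y) hc31)
      · rw [min_eq_right h]
        calc G.φ x (min (dist x y) T) ≤ G.φ x T :=
              G.mono x _ T (lt_min (dist_pos.mpr hxy) hT0) (min_le_right _ _) hTT
          _ ≤ β := (hroot x).2
          _ = β / τ * τ := by field_simp
          _ ≤ c3 * τ := by
            gcongr
            exact le_max_right _ _
    · refine (min_le_left _ _).trans (h2.trans ?_)
      change G.c0 * c2 * G.φ x (min (dist x y) T) ≤ _
      gcongr
      exact le_max_left _ _
  · intro x y hxy
    change dist x y ≤ d₀ / T * min (dist x y) T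
    rcases le_total (dist x y) T with h | h
    · rw [min_eq_left h]
      apply le_mul_of_one_le_left dist_nonneg
      rwa [one_le_div hT0]
    · rw [min_eq_right h, div_mul_cancel₀ _ hT0.ne']
      have := dist_adm x y
      rw [hZ] at this
      exact (ENNReal.ofReal_le_ofReal_iff hd₀.le).mp this
  · intro x y
    exact ENNReal.ofReal_le_ofReal (min_le_right _ _)
  · intro x r hr hrτ
    have hrτ' : r ≤ τ := (ENNReal.ofReal_le_ofReal_iff hτ0.le).mp hrτ
    refine ⟨⟨T, hT0, hTT, hrτ'.trans (hroot x).1⟩, fun y hxy h => ?_⟩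
    have h1 : min (δ x y) τ < r := h
    rcases min_lt_iff.mp h1 with h2 | h2
    · exact lt_of_le_of_lt (hδc x y hxy).1 h2
    · linarith

theorem core {Z : Type u} [MetricSpace Z] [CompleteSpace Z] {ρ : ℝ} {N : ℕ}
    (hρ : 0 < ρ) (hρ1 : ρ ≤ 1 / 20) (hN : 2 ≤ N)
    (hc : ∀ (x : Z) (R : ℝ), 0 < R → ENNReal.ofReal (2 * R) ≤ Metric.ediam (Set.univ : Set Z) →
      ∀ A : Finset Z, (∀ a ∈ A, dist a x < R) →
        (∀ a ∈ A, ∀ b ∈ A, a ≠ b → ρ * R ≤ dist a b) → A.card ≤ N)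
    {s : ℝ} (hs0 : 0 < s)
    (hs : (ρ⁻¹) ^ s = N) {K : ℝ} (hK : 1 ≤ K) (hU : UnifPerf Z K) [Nontrivial Z] :
    ∃ (W : Type u) (_ : MetricSpace W) (f : Z ≃ₜ W),
      AhlforsRegular W s ∧ IsQuasisymmetric (f : Z → W) := by
  rcases eq_or_ne (Metric.ediam (Set.univ : Set Z)) ⊤ with h | h
  · refine core_unbdd hρ hρ1 hN (fun x R hR _ => hc x R hR ?_) hs0 hs hK hU h
    rw [h]; exact le_top
  · have hpos : 0 < (Metric.ediam (Set.univ : Set Z)).toReal := by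
      obtain ⟨x, y, hxy⟩ := exists_pair_ne Z
      refine ENNReal.toReal_pos ?_ h
      have h1 := dist_adm x y
      have h2 : 0 < ENNReal.ofReal (dist x y) := ENNReal.ofReal_pos.mpr (dist_pos.mpr hxy)
      exact (h2.trans_le h1).ne'
    have hZ := (ENNReal.ofReal_toReal h).symm
    refine core_bdd hpos hρ hρ1 hN (fun x R hR hRd => hc x R hR ?_) hs0 hs hK hU hZ
    have h3 := (ENNReal.ofReal_le_ofReal_iff (by positivity)).mp hRd
    rw [hZ]
    exact ENNReal.ofReal_le_ofReal (by linarith)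

lemma confdim_subsingleton {X : Type u} [MetricSpace X] [Subsingleton X] : confdim X ≤ 0 := by
  apply csInf_le ⟨0, fun q hq => hq.1⟩
  let iM : MeasurableSpace X := borel X
  have iB : BorelSpace X := ⟨rfl⟩
  refine ⟨le_rfl, X, inferInstance, Homeomorph.refl X, ⟨?_, iM, iB, 0, 1, le_rfl, ?_⟩,
    Homeomorph.refl _, fun x y z t h => h⟩
  · apply Metric.complete_of_cauchySeq_tendsto
    intro u _
    exact ⟨u 0, tendsto_const_nhds.congr (fun n => Subsingleton.elim _ _)⟩
  · intro w r hr hd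
    exfalso
    have h0 : Metric.ediam (Set.univ : Set X) = 0 :=
      Metric.ediam_subsingleton Set.subsingleton_univ
    have h1 : ENNReal.ofReal r ≤ Metric.ediam (Set.univ : Set X) := hd
    rw [h0] at h1
    exact absurd (ENNReal.ofReal_pos.mpr hr) (not_lt.mpr h1)

end PorousQS
end

open PorousQS in
/-- If `X` is a nonempty metric space whose conformal dimension `Q = confdim X` is positive
(finiteness being witnessed by attainment) and attained — i.e. there are an Ahlfors
`Q`-regular space `W` and a quasisymmetric homeomorphism from `X` onto `W` — then no
nonempty porous subset `Y ⊆ X` (with the induced metric) admits a quasisymmetric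
homeomorphism onto `X`. -/
theorem no_porous_subset_qs_to_self_of_attained {X : Type u} [MetricSpace X] [Nonempty X]
    (hpos : 0 < confdim X)
    (hatt : ∃ (W : Type u) (_ : MetricSpace W) (f : X ≃ₜ W),
        AhlforsRegular W (confdim X) ∧ IsQuasisymmetric (f : X → W)) :
    ∀ Y : Set X, Y.Nonempty → Porous Y →
      ¬ ∃ g : ↥Y ≃ₜ X, IsQuasisymmetric (g : ↥Y → X) := by
  rintro Y - hY ⟨g, hg⟩
  rcases subsingleton_or_nontrivial X with hX | hX
  · exact absurd hpos (not_lt.mpr confdim_subsingleton)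
  obtain ⟨W, instW, f, ⟨hcomp, iM, iB, μ, C, hC, hμ⟩, hf⟩ := hatt
  have hA : AhlMeas μ C (confdim X) := hμ
  obtain ⟨KW, hKW, hUW⟩ := ahlfors_unifPerf hC hpos hA
  have hY' := porous_transfer f hf hKW hUW hY
  obtain ⟨ρ, N, hρ, hρ1, hN, hNQ, hcount⟩ := counting hC hpos hA hY'
  let fY : ↥Y ≃ₜ ↥(f '' Y) := f.image Y
  have hfY : IsQuasisymmetric (fY : ↥Y → ↥(f '' Y)) := by
    obtain ⟨η, h⟩ := hf
    exact ⟨η, fun x y z t hd => h x y z t hd⟩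
  let k : W ≃ₜ ↥(f '' Y) := f.symm.trans (g.symm.trans fY)
  have hk : IsQuasisymmetric (k : W → ↥(f '' Y)) := by
    have h1 : IsQuasisymmetric g.symm := qs_symm g.toEquiv hg
    have h2 : IsQuasisymmetric f.symm := qs_symm f.toEquiv hf
    have h3 := qs_comp hfY (qs_comp h1 h2)
    exact h3
  have hZc : CompleteSpace ↥(f '' Y) := complete_of_qs k.toEquiv hk
  obtain ⟨K, hK, hUZ⟩ := unifPerf_transfer k hk hKW hUW
  have hZn : Nontrivial ↥(f '' Y) := (fY.symm.trans g).toEquiv.nontrivial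
  have hN1 : (1:ℝ) < N := by exact_mod_cast (by omega : 1 < N)
  have hlogρ : 0 < Real.log ρ⁻¹ := Real.log_pos ((one_lt_inv₀ hρ).mpr (by linarith))
  have hlogN : 0 < Real.log N := Real.log_pos hN1
  set s : ℝ := Real.log N / Real.log ρ⁻¹ with hs
  have hs0 : 0 < s := div_pos hlogN hlogρ
  have hsN : (ρ⁻¹) ^ s = N := by
    rw [Real.rpow_def_of_pos (by positivity), hs, mul_div_cancel₀ _ hlogρ.ne',
      Real.exp_log (by linarith)]
  have hsQ : s < confdim X := by
    rw [hs, div_lt_iff₀ hlogρ]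
    have h1 : Real.log (N * ρ ^ confdim X) < 0 := Real.log_neg (by positivity) hNQ
    rw [Real.log_mul (by positivity) (by positivity), Real.log_rpow hρ] at h1
    rw [Real.log_inv]
    linarith
  obtain ⟨W', instW', f', hW', hf'⟩ := core (Z := ↥(f '' Y)) hρ hρ1 hN (by
    classical
    intro x R hR hRd A hA1 hA2
    have hle : Metric.ediam (Set.univ : Set ↥(f '' Y)) ≤ Metric.ediam (Set.univ : Set W) := by
      apply Metric.ediam_le
      intro p _ q _
      exact Metric.edist_le_ediam_of_mem (Set.mem_univ (p : W)) (Set.mem_univ (q : W))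
    have := hcount x R hR (hRd.trans hle) (A.map (Function.Embedding.subtype _))
      (by
        intro a ha
        obtain ⟨a', ha', rfl⟩ := Finset.mem_map.mp ha
        exact hA1 a' ha')
      (by
        intro a ha
        obtain ⟨a', ha', rfl⟩ := Finset.mem_map.mp ha
        exact a'.2)
      (by
        intro a ha b hb hab
        obtain ⟨a', ha', rfl⟩ := Finset.mem_map.mp ha
        obtain ⟨b', hb', rfl⟩ := Finset.mem_map.mp hb
        exact hA2 a' ha' b' hb' (fun h => hab (by rw [h])))
    rwa [Finset.card_map] at this) hs0 hsN hK hUZ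
  have hgs : IsQuasisymmetric g.symm := qs_symm g.toEquiv hg
  have hq := qs_comp hf' (qs_comp hfY hgs)
  have hmem : s ∈ confdimSet X :=
    ⟨hs0.le, W', instW', g.symm.trans (fY.trans f'), hW',
      hq⟩
  have : confdim X ≤ s := csInf_le ⟨0, fun q hq => hq.1⟩ hmem
  linarith
end

section
/- Let p > 1 and C > 0 be real numbers, and let (a_n)_{n≥0} be a sequence of nonnegative real numbers satisfying a_n ≤ (C / n^{p-1}) · max{a_0, a_1, …, a_{n-1}} for every n ≥ 1. Then the sequence (a_n) is bounded and a_n → 0 as n → ∞. -/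
/-- Let `p > 1`, `C > 0`, and let `(a_n)` be a sequence of nonnegative reals with
`a_n ≤ (C / n^(p-1)) · max{a_0, …, a_{n-1}}` for every `n ≥ 1`. Then `(a_n)` is bounded
and tends to `0`. -/
theorem bounded_and_tendsto_zero_of_rec (p C : ℝ) (hp : 1 < p) (hC : 0 < C)
    (a : ℕ → ℝ) (ha : ∀ n : ℕ, 0 ≤ a n)
    (hrec : ∀ n : ℕ, ∀ hn : 1 ≤ n,
      a n ≤ (C / (n : ℝ) ^ (p - 1)) *
        (Finset.range n).sup' (Finset.nonempty_range_iff.mpr (Nat.one_le_iff_ne_zero.mp hn))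
          a) :
    BddAbove (Set.range a) ∧ Filter.Tendsto a Filter.atTop (nhds 0) := by
  have ht : Filter.Tendsto (fun n : ℕ => C / (n : ℝ) ^ (p - 1)) Filter.atTop (nhds 0) :=
    Filter.Tendsto.div_atTop tendsto_const_nhds
      ((tendsto_rpow_atTop (by linarith)).comp tendsto_natCast_atTop_atTop)
  obtain ⟨N, hN⟩ := Filter.eventually_atTop.mp (ht.eventually_le_const (zero_lt_one))
  set M := ∑ i ∈ Finset.range (N + 1), a i with hM
  have hM0 : 0 ≤ M := Finset.sum_nonneg (fun i _ => ha i)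
  have hc0 : ∀ n : ℕ, 0 ≤ C / (n : ℝ) ^ (p - 1) := fun n => by positivity
  have hb : ∀ n, a n ≤ M := by
    intro n
    induction n using Nat.strong_induction_on with
    | _ n ih =>
      by_cases h : n < N + 1
      · exact Finset.single_le_sum (f := a) (fun i _ => ha i) (Finset.mem_range.mpr h)
      · have hn : 1 ≤ n := by omega
        refine (hrec n hn).trans ?_
        calc _ ≤ (C / (n : ℝ) ^ (p - 1)) * M :=
              mul_le_mul_of_nonneg_left
                (Finset.sup'_le _ _ (fun i hi => ih i (Finset.mem_range.mp hi))) (hc0 n)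
          _ ≤ 1 * M := mul_le_mul_of_nonneg_right (hN n (by omega)) hM0
          _ = M := one_mul M
  refine ⟨⟨M, by rintro _ ⟨n, rfl⟩; exact hb n⟩, ?_⟩
  have ht2 : Filter.Tendsto (fun n : ℕ => C / (n : ℝ) ^ (p - 1) * M) Filter.atTop (nhds 0) := by
    simpa using ht.mul_const M
  refine tendsto_of_tendsto_of_tendsto_of_le_of_le' tendsto_const_nhds ht2
    (Filter.Eventually.of_forall ha) ?_
  filter_upwards [Filter.eventually_ge_atTop 1] with n hn
  exact (hrec n hn).trans (mul_le_mul_of_nonneg_left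
    (Finset.sup'_le _ _ (fun i _ => hb i)) (hc0 n))
end
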